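/- arXiv:1803.11092 — 2 statements merged into one kernel-verified Lean document; each statement's English description precedes it below -/
import Mathlib

section
/- Let k be an integer, m a positive integer, r a positive integer, s an integer, and ν a nonnegative integer. Let Γ(r,m) = { [[a,b],[c,d]] ∈ SL₂(ℤ) : a ≡ 1, d ≡ 1, c ≡ 0 (mod r) and cm ≡ 0 (mod r²) }, a finite-index subgroup of SL₂(ℤ). Let g be a Jacobi form of weight k and index m, with Fourier coefficients c(n,ρ) and qⁿ-coefficients g_n(ζ) = Σ_ρ c(n,ρ) ζ^ρ. Then (ζ − e(s/r))^ν divides g_n(ζ) in ℂ[ζ,ζ⁻¹] for every n ≥ 0 if and only if Σ_{ρ∈ℤ} ρ^j c(n,ρ) e(ρs/r) = 0 for all integers j, n with 0 ≤ j < ν and 0 ≤ n ≤ ((k+j)/12)·[SL₂(ℤ) : Γ(r,m)]. -/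
/-- The group `Γ(r,m) = { [[a,b],[c,d]] ∈ SL₂(ℤ) : a ≡ 1, d ≡ 1, c ≡ 0 (mod r),
cm ≡ 0 (mod r²) }`. -/
def GammaRM (r m : ℤ) : Subgroup (Matrix.SpecialLinearGroup (Fin 2) ℤ) where
  carrier := {γ | γ 0 0 ≡ 1 [ZMOD r] ∧ γ 1 1 ≡ 1 [ZMOD r] ∧
    γ 1 0 ≡ 0 [ZMOD r] ∧ γ 1 0 * m ≡ 0 [ZMOD r ^ 2]}
  one_mem' := by
    refine ⟨?_, ?_, ?_, ?_⟩ <;> simp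
  mul_mem' := by
    rintro A B ⟨hA1, hA2, hA3, hA4⟩ ⟨hB1, hB2, hB3, hB4⟩
    have hAB : ∀ i j : Fin 2, (A * B) i j = A i 0 * B 0 j + A i 1 * B 1 j := by
      intro i j
      simp [Matrix.SpecialLinearGroup.coe_mul, Matrix.mul_apply, Fin.sum_univ_two]
    refine ⟨?_, ?_, ?_, ?_⟩
    · rw [hAB]
      calc A 0 0 * B 0 0 + A 0 1 * B 1 0
          ≡ 1 * 1 + A 0 1 * 0 [ZMOD r] := (hA1.mul hB1).add (Int.ModEq.mul_left _ hB3)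
        _ = 1 := by ring
    · rw [hAB]
      calc A 1 0 * B 0 1 + A 1 1 * B 1 1
          ≡ 0 * B 0 1 + 1 * 1 [ZMOD r] := (Int.ModEq.mul_right _ hA3).add (hA2.mul hB2)
        _ = 1 := by ring
    · rw [hAB]
      calc A 1 0 * B 0 0 + A 1 1 * B 1 0
          ≡ 0 * B 0 0 + A 1 1 * 0 [ZMOD r] :=
            (Int.ModEq.mul_right _ hA3).add (Int.ModEq.mul_left _ hB3)
        _ = 0 := by ring
    · rw [hAB]
      have h4 : (A 1 0 * B 0 0 + A 1 1 * B 1 0) * m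
          = (A 1 0 * m) * B 0 0 + A 1 1 * (B 1 0 * m) := by ring
      rw [h4]
      have hA4' : r ^ 2 ∣ A 1 0 * m := (Int.modEq_zero_iff_dvd).mp hA4
      have hB4' : r ^ 2 ∣ B 1 0 * m := (Int.modEq_zero_iff_dvd).mp hB4
      exact (Int.modEq_zero_iff_dvd).mpr
        (dvd_add (hA4'.mul_right _) (hB4'.mul_left _))
  inv_mem' := by
    rintro A ⟨hA1, hA2, hA3, hA4⟩
    have hinv : ∀ i j : Fin 2,
        A⁻¹ i j = (!![A 1 1, -A 0 1; -A 1 0, A 0 0] : Matrix (Fin 2) (Fin 2) ℤ) i j := by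
      intro i j
      rw [Matrix.SpecialLinearGroup.SL2_inv_expl A]
      simp [Matrix.etaExpand_eq]
    refine ⟨?_, ?_, ?_, ?_⟩
    · rw [hinv]; simpa using hA2
    · rw [hinv]; simpa using hA1
    · rw [hinv]
      simpa using hA3.neg
    · rw [hinv]
      have he : (!![A 1 1, -A 0 1; -A 1 0, A 0 0] : Matrix (Fin 2) (Fin 2) ℤ) 1 0 = -A 1 0 := by
        simp
      rw [he]
      calc (-(A 1 0)) * m = -(A 1 0 * m) := by ring
        _ ≡ -0 [ZMOD r ^ 2] := hA4.neg
        _ = 0 := by ring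

open Complex LaurentPolynomial


lemma power_lemma (α : ℕ → ℂ) (P : ℂ → ℂ) (hP : ∀ w, HasSum (fun i => α i * w ^ i) (P w))
    (j : ℕ) (hα : ∀ i < j, α i = 0) :
    Filter.Tendsto (fun w => P w / w ^ j) (nhdsWithin 0 {0}ᶜ) (nhds (α j)) := by
  have hs1 : Summable (fun i => ‖α i‖) := by
    have := (hP 1).summable.norm
    simpa using this
  have hc : ContinuousOn (fun w : ℂ => ∑' i, α (i + j) * w ^ i) (Metric.closedBall 0 1) := by
    refine continuousOn_tsum (u := fun i => ‖α (i + j)‖) (fun i => by fun_prop)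
      ((summable_nat_add_iff j).2 hs1) ?_
    intro n x hx
    rw [norm_mul, norm_pow]
    have : ‖x‖ ≤ 1 := by simpa using hx
    exact mul_le_of_le_one_right (norm_nonneg _) (pow_le_one₀ (norm_nonneg _) this)
  have hc0 : ContinuousAt (fun w : ℂ => ∑' i, α (i + j) * w ^ i) 0 :=
    hc.continuousAt (Metric.closedBall_mem_nhds _ one_pos)
  have h0 : (∑' i, α (i + j) * (0:ℂ) ^ i) = α j := by
    rw [tsum_eq_single 0]
    · simp
    · intro b hb; simp [hb]
  have ht : Filter.Tendsto (fun w : ℂ => ∑' i, α (i + j) * w ^ i) (nhdsWithin 0 {0}ᶜ)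
      (nhds (α j)) := by
    have := hc0.tendsto
    rw [h0] at this
    exact this.mono_left nhdsWithin_le_nhds
  refine ht.congr' ?_
  filter_upwards [self_mem_nhdsWithin] with w hw
  have hw : w ≠ 0 := hw
  have h1 := hP w
  rw [← hasSum_nat_add_iff' j] at h1
  have h2 : ∑ i ∈ Finset.range j, α i * w ^ i = 0 :=
    Finset.sum_eq_zero fun i hi => by rw [hα i (Finset.mem_range.1 hi), zero_mul]
  rw [h2, sub_zero] at h1
  have h3 : HasSum (fun i => α (i + j) * w ^ i) (P w / w ^ j) := by
    have := h1.div_const (w ^ j)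
    refine this.congr_fun ?_ |> id
    intro i
    field_simp
    try ring
  exact h3.tsum_eq

lemma power_lemma_rev (α : ℕ → ℂ) (P : ℂ → ℂ) (hP : ∀ w, HasSum (fun i => α i * w ^ i) (P w))
    (j : ℕ) (L : ℂ)
    (hL : Filter.Tendsto (fun w => P w / w ^ j) (nhdsWithin 0 {0}ᶜ) (nhds L)) :
    (∀ i < j, α i = 0) ∧ α j = L := by
  have h1 : ∀ i < j, α i = 0 := by
    intro i
    induction i using Nat.strong_induction_on with
    | _ i ih =>
      intro hi
      have h1 := power_lemma α P hP i (fun l hl => ih l hl (hl.trans hi))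
      have h2 : Filter.Tendsto (fun w : ℂ => P w / w ^ j * w ^ (j - i)) (nhdsWithin 0 {0}ᶜ)
          (nhds (L * 0)) := by
        refine hL.mul ?_
        have : ContinuousAt (fun w : ℂ => w ^ (j - i)) 0 := by fun_prop
        have h := this.tendsto
        rw [zero_pow (by omega)] at h
        exact h.mono_left nhdsWithin_le_nhds
      rw [mul_zero] at h2
      refine tendsto_nhds_unique (h1.congr' ?_) h2
      filter_upwards [self_mem_nhdsWithin] with w hw
      have hw : w ≠ 0 := hw
      have : w ^ j = w ^ i * w ^ (j - i) := by rw [← pow_add]; congr 1; omega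
      rw [this]
      field_simp
  exact ⟨h1, tendsto_nhds_unique (power_lemma α P hP j h1) hL⟩

lemma power_transfer (α β : ℕ → ℂ) (P Q E : ℂ → ℂ) (D : ℂ) (hD : D ≠ 0)
    (hP : ∀ w, HasSum (fun i => α i * w ^ i) (P w))
    (hQ : ∀ w, HasSum (fun i => β i * w ^ i) (Q w))
    (hE : Continuous E) (hE0 : ∀ w, E w ≠ 0)
    (hPQ : ∀ w, P w = E w * Q (D * w)) (j : ℕ) (hα : ∀ i < j, α i = 0) :
    α j = E 0 * (D ^ j * β j) := by
  have h1 := power_lemma α P hP j hα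
  have hQ' : ∀ w, HasSum (fun i => (D ^ i * β i) * w ^ i) (Q (D * w)) := by
    intro w
    refine (hQ (D * w)).congr_fun ?_ |> id
    intro i
    rw [mul_pow]; ring
  have h2 := power_lemma_rev (fun i => D ^ i * β i) (fun w => Q (D * w)) hQ' j (α j / E 0) ?_
  · have := h2.2
    rw [this]; field_simp [hE0 0]
  · have h3 : Filter.Tendsto E (nhdsWithin 0 {0}ᶜ) (nhds (E 0)) :=
      (hE.tendsto 0).mono_left nhdsWithin_le_nhds
    refine (h1.div h3 (hE0 0)).congr ?_
    intro w
    simp only [Pi.div_apply]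
    rw [hPQ]
    have := hE0 w
    field_simp

/-- The `j`-th moment of a Laurent polynomial at `a`. -/
noncomputable def lpMoment (a : ℂ) (j : ℕ) : LaurentPolynomial ℂ →ₗ[ℂ] ℂ :=
  (Finsupp.linearCombination ℂ (fun ρ : ℤ => (ρ : ℂ) ^ j * a ^ ρ)).comp
    (AddMonoidAlgebra.coeffLinearEquiv ℂ (S := ℂ) (M := ℤ)).toLinearMap

lemma lpMoment_CT (a : ℂ) (j : ℕ) (n : ℤ) (b : ℂ) :
    lpMoment a j (C b * T n) = b * ((n : ℂ) ^ j * a ^ n) := by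
  rw [← LaurentPolynomial.single_eq_C_mul_T]
  change Finsupp.linearCombination ℂ (fun ρ : ℤ => (ρ : ℂ) ^ j * a ^ ρ) (Finsupp.single n b) = _
  rw [Finsupp.linearCombination_single, smul_eq_mul]

lemma lpMoment_eq_finsum (a : ℂ) (j : ℕ) (f : LaurentPolynomial ℂ) :
    lpMoment a j f = ∑ᶠ ρ : ℤ, (ρ : ℂ) ^ j * f.coeff ρ * a ^ ρ := by
  rw [finsum_eq_sum_of_support_subset (s := f.coeff.support)]
  · simp only [lpMoment, LinearMap.comp_apply, Finsupp.linearCombination_apply, Finsupp.sum]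
    refine Finset.sum_congr rfl fun ρ _ => ?_
    simp only [smul_eq_mul, LinearEquiv.coe_coe, AddMonoidAlgebra.coeffLinearEquiv]
    simp
    ring
  · intro ρ hρ
    simp only [Function.mem_support, ne_eq, mul_eq_zero, not_or] at hρ
    simpa using hρ.1.2

lemma lpMoment_mul (a : ℂ) (ha : a ≠ 0) (j : ℕ) (h : LaurentPolynomial ℂ) :
    lpMoment a j ((T 1 - C a) * h) =
      a * ∑ i ∈ Finset.range j, (j.choose i : ℂ) * lpMoment a i h := by
  induction h using LaurentPolynomial.induction_on' with
  | add p q hp hq =>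
    rw [mul_add, map_add, hp, hq, ← mul_add, ← Finset.sum_add_distrib]
    simp only [map_add, mul_add]
  | C_mul_T n b =>
    have : (T 1 - C a) * (C b * T n) = C b * T (n + 1) - C (a * b) * T n := by
      rw [T_add, map_mul]; ring
    rw [this, map_sub]
    simp only [lpMoment_CT]
    rw [zpow_add_one₀ ha]
    have hb : ((n : ℂ) + 1) ^ j = ∑ i ∈ Finset.range j, (j.choose i : ℂ) * (n : ℂ) ^ i
        + (n : ℂ) ^ j := by
      rw [add_pow, Finset.sum_range_succ]
      simp [mul_comm]
    push_cast
    rw [hb]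
    have h2 : ∑ i ∈ Finset.range j, (j.choose i : ℂ) * (b * ((n : ℂ) ^ i * a ^ n)) =
        b * a ^ n * ∑ i ∈ Finset.range j, (j.choose i : ℂ) * (n : ℂ) ^ i := by
      rw [Finset.mul_sum]
      refine Finset.sum_congr rfl fun i _ => by ring
    rw [h2]; ring

lemma lp_dvd_of_moment (a : ℂ) (ha : a ≠ 0) (f : LaurentPolynomial ℂ)
    (h0 : lpMoment a 0 f = 0) : (T 1 - C a) ∣ f := by
  obtain ⟨N, p, hp⟩ := exists_T_pow f
  have he : ∀ f : LaurentPolynomial ℂ,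
      lpMoment a 0 f = LaurentPolynomial.eval₂ (RingHom.id ℂ) (Units.mk0 a ha) f := by
    intro f
    induction f using LaurentPolynomial.induction_on' with
    | add p q hp hq => rw [map_add, map_add, hp, hq]
    | C_mul_T n b => rw [lpMoment_CT]; simp
  have hroot : p.IsRoot a := by
    have h1 : LaurentPolynomial.eval₂ (RingHom.id ℂ) (Units.mk0 a ha) (Polynomial.toLaurent p)
        = 0 := by
      rw [hp, map_mul, ← he, h0, zero_mul]
    rw [eval₂_toLaurent] at h1
    exact h1
  obtain ⟨p', rfl⟩ := Polynomial.dvd_iff_isRoot.2 hroot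
  have h2 : (T 1 - C a : LaurentPolynomial ℂ) ∣ f * T N := by
    rw [← hp, map_mul]
    exact ⟨Polynomial.toLaurent p', by simp⟩
  exact (isUnit_T (N : ℤ)).dvd_mul_right.1 h2

lemma lp_dvd_iff (a : ℂ) (ha : a ≠ 0) (ν : ℕ) (f : LaurentPolynomial ℂ) :
    (T 1 - C a) ^ ν ∣ f ↔ ∀ j < ν, lpMoment a j f = 0 := by
  induction ν generalizing f with
  | zero => simp
  | succ ν ih =>
    constructor
    · rintro ⟨h, rfl⟩ j hj
      rw [pow_succ', mul_assoc, lpMoment_mul a ha]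
      rw [Finset.sum_eq_zero, mul_zero]
      intro i hi
      rw [(ih _).1 (dvd_mul_right _ h) i (by have := Finset.mem_range.1 hi; omega), mul_zero]
    · intro H
      obtain ⟨h, rfl⟩ := lp_dvd_of_moment a ha f (H 0 (by omega))
      rw [pow_succ']
      refine mul_dvd_mul_left _ ((ih h).2 ?_)
      intro j
      induction j using Nat.strong_induction_on with
      | _ j ihj =>
        intro hj
        have h1 := H (j + 1) (by omega)
        rw [lpMoment_mul a ha, Finset.sum_range_succ, Finset.sum_eq_zero, zero_add] at h1
        · simp only [mul_eq_zero, ha, false_or] at h1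
          rcases h1 with h1 | h1
          · exfalso
            have : (j + 1).choose j ≠ 0 := (Nat.choose_pos (by omega)).ne'
            exact this (by exact_mod_cast h1)
          · exact h1
        · intro i hi
          have := Finset.mem_range.1 hi
          rw [ihj i this (by omega), mul_zero]

section SturmGeneral
open UpperHalfPlane
open scoped MatrixGroups ModularForm Topology

lemma order_of_decay {W : ℤ} (F : ModularForm (Matrix.SpecialLinearGroup.mapGL (R := ℤ) (n := Fin 2) ℝ).range W)
    (M : ℕ) (hO : (F : ℍ → ℂ) =O[atImInfty] fun τ : ℍ => Real.exp (-2 * Real.pi * M * τ.im)) :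
    (M : ℕ∞) ≤ (qExpansion 1 F).order := by
  refine PowerSeries.nat_le_order _ _ fun n hn => ?_
  obtain ⟨B, hB⟩ := hO.bound
  rw [Filter.eventually_iff, atImInfty_mem] at hB
  obtain ⟨A, hA⟩ := hB
  have hb : ∀ t : ℝ, max A 1 ≤ t → ‖(qExpansion 1 F).coeff n‖ ≤
      |B| * Real.exp (-2 * Real.pi * t) := by
    intro t ht
    have ht0 : 0 < t := lt_of_lt_of_le one_pos ((le_max_right _ _).trans ht)
    rw [ModularFormClass.qExpansion_coeff_eq_intervalIntegral (F := ModularForm _ W) F one_pos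
      one_mem_strictPeriods_SL n ht0]
    have : ‖∫ u in (0:ℝ)..1, 1 / Function.Periodic.qParam 1 (u + t * Complex.I) ^ n *
        F ⟨u + t * Complex.I, by simpa using ht0⟩‖ ≤ |B| * Real.exp (-2 * Real.pi * t) * |1 - 0| := by
      refine intervalIntegral.norm_integral_le_of_norm_le_const fun u _ => ?_
      have h1 := hA ⟨u + t * Complex.I, by simpa using ht0⟩
        (by simpa [UpperHalfPlane.im] using (le_max_left _ _).trans ht)
      simp only [Set.mem_ofPred_eq] at h1
      have him : (⟨u + t * Complex.I, by simpa using ht0⟩ : ℍ).im = t := by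
        simp [UpperHalfPlane.im]
      rw [him] at h1
      have him2 : ((u:ℂ) + t * Complex.I).im = t := by simp
      have hq : ‖1 / Function.Periodic.qParam 1 (u + t * Complex.I) ^ n‖ =
          Real.exp (-(n * (-2 * Real.pi * t / 1))) := by
        rw [norm_div, norm_one, norm_pow, Function.Periodic.norm_qParam, him2,
          ← Real.exp_nat_mul, one_div, ← Real.exp_neg]
      rw [norm_mul, hq]
      calc _ ≤ Real.exp (-(n * (-2 * Real.pi * t / 1))) *
            (|B| * Real.exp (-2 * Real.pi * M * t)) := by
            refine mul_le_mul_of_nonneg_left (h1.trans ?_) (Real.exp_pos _).le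
            rw [Real.norm_eq_abs, abs_of_pos (Real.exp_pos _)]
            exact mul_le_mul_of_nonneg_right (le_abs_self B) (Real.exp_pos _).le
        _ = |B| * Real.exp (-2 * Real.pi * t * (M - n)) := by
            rw [mul_left_comm, ← Real.exp_add]; congr 2; ring
        _ ≤ |B| * Real.exp (-2 * Real.pi * t) := by
            refine mul_le_mul_of_nonneg_left (Real.exp_le_exp.2 ?_) (abs_nonneg _)
            have : (1:ℝ) ≤ M - n := by
              have : ((n + 1 : ℕ) : ℝ) ≤ M := by exact_mod_cast hn
              push_cast at this; linarith
            have h2 : 0 < 2 * Real.pi * t := by positivity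
            nlinarith
    simpa using this
  have hlim : Filter.Tendsto (fun t : ℝ => |B| * Real.exp (-2 * Real.pi * t)) Filter.atTop
      (𝓝 (|B| * 0)) := by
    refine Filter.Tendsto.const_mul _ (Real.tendsto_exp_atBot.comp ?_)
    exact Filter.Tendsto.const_mul_atTop_of_neg (by nlinarith [Real.pi_pos]) Filter.tendsto_id
  rw [mul_zero] at hlim
  have := ge_of_tendsto hlim (Filter.eventually_atTop.2 ⟨max A 1, hb⟩)
  simpa using this

lemma decay_of_coeff (f : ℍ → ℂ) (a : ℕ → ℂ)
    (ha : ∀ τ : ℍ, HasSum (fun n => a n • Function.Periodic.qParam 1 τ ^ n) (f τ)) (M : ℕ)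
    (h0 : ∀ n < M, a n = 0) :
    f =O[atImInfty] fun τ : ℍ => Real.exp (-2 * Real.pi * M * τ.im) := by
  set g : ℍ → ℂ := fun τ => f τ / Function.Periodic.qParam 1 τ ^ M with hg
  have hgs : ∀ τ : ℍ, HasSum (fun n => a (n + M) • Function.Periodic.qParam 1 τ ^ n) (g τ) := by
    intro τ
    have h1 := ha τ
    rw [← hasSum_nat_add_iff' M, Finset.sum_eq_zero (fun i hi => by
      rw [h0 i (Finset.mem_range.1 hi), zero_smul]), sub_zero] at h1
    refine (h1.div_const (Function.Periodic.qParam 1 τ ^ M)).congr_fun ?_ |> id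
    intro i
    have := Function.Periodic.qParam_ne_zero (h := 1) (τ : ℂ)
    simp only [smul_eq_mul]
    field_simp
    try ring
  have hb := isBoundedAtImInfty_of_hasSum_qExpansion one_pos hgs
  have h2 : f = fun τ => g τ * Function.Periodic.qParam 1 τ ^ M := by
    ext τ
    have := Function.Periodic.qParam_ne_zero (h := 1) (τ : ℂ)
    simp only [hg]
    field_simp
  rw [h2]
  have h3 : (fun τ : ℍ => Function.Periodic.qParam 1 τ ^ M) =O[atImInfty]
      fun τ : ℍ => Real.exp (-2 * Real.pi * M * τ.im) := by
    refine Asymptotics.IsBigO.of_norm_eventuallyLE (Filter.Eventually.of_forall fun τ => ?_)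
    simp only [norm_pow, Function.Periodic.norm_qParam, ← Real.exp_nat_mul, coe_im]
    apply le_of_eq; congr 1; ring
  have hb' : g =O[atImInfty] (1 : ℍ → ℝ) := hb
  have h4 := hb'.mul h3
  simpa only [Pi.one_apply, one_mul] using h4

theorem sturm_general (G : Subgroup SL(2, ℤ)) [G.FiniteIndex] (hT : ModularGroup.T ∈ G) (K : ℤ)
    (f : ModularForm (G.map (Matrix.SpecialLinearGroup.mapGL ℝ)) K) (a : ℕ → ℂ)
    (ha : ∀ τ : ℍ, HasSum (fun n => a n • Function.Periodic.qParam 1 τ ^ n) (f τ))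
    (h0 : ∀ n : ℕ, (n : ℝ) ≤ (K : ℝ) / 12 * (G.index : ℝ) → a n = 0) (n : ℕ) : a n = 0 := by
  have hper : (1 : ℝ) ∈ (G.map (Matrix.SpecialLinearGroup.mapGL ℝ)).strictPeriods := by
    rw [Subgroup.mem_strictPeriods_iff]
    refine ⟨ModularGroup.T, hT, ?_⟩
    ext i j
    rw [Matrix.SpecialLinearGroup.mapGL_coe_matrix, Matrix.SpecialLinearGroup.map_apply_coe,
      ModularGroup.coe_T]
    fin_cases i <;> fin_cases j <;> simp
  have hf : f = 0 := by
    rcases lt_or_ge K 0 with hK | hK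
    · exact ModularForm.isZero_of_neg_weight hK f
    have hidx : Nat.card ((Matrix.SpecialLinearGroup.mapGL (R := ℤ) (n := Fin 2) ℝ).range ⧸
        (G.map (Matrix.SpecialLinearGroup.mapGL ℝ)).subgroupOf
          (Matrix.SpecialLinearGroup.mapGL ℝ).range) = G.index := by
      change (G.map (Matrix.SpecialLinearGroup.mapGL ℝ)).relIndex
          (Matrix.SpecialLinearGroup.mapGL ℝ).range = _
      rw [MonoidHom.range_eq_map, Subgroup.relIndex_map_map_of_injective,
        Subgroup.relIndex_top_right]
      exact Matrix.SpecialLinearGroup.mapGL_injective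
    have hbd : ∀ q : ((Matrix.SpecialLinearGroup.mapGL (R := ℤ) (n := Fin 2) ℝ).range ⧸
        (G.map (Matrix.SpecialLinearGroup.mapGL ℝ)).subgroupOf
          (Matrix.SpecialLinearGroup.mapGL ℝ).range),
        IsBoundedAtImInfty (SlashInvariantForm.quotientFunc f q) := by
      intro q
      induction q using Quotient.inductionOn with
      | h r =>
        rw [SlashInvariantForm.quotientFunc_mk]
        refine ModularFormClass.bdd_at_cusps f (c := r.val⁻¹ • OnePoint.infty) ?_ _ rfl
        rw [Subgroup.IsArithmetic.isCusp_iff_isCusp_SL2Z, isCusp_SL2Z_iff']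
        obtain ⟨r, γ, rfl⟩ := r
        exact ⟨γ⁻¹, by simp⟩
    have hn : ModularForm.norm (Matrix.SpecialLinearGroup.mapGL (R := ℤ) (n := Fin 2) ℝ).range f = 0 := by
      apply ModularForm.sturm_bound_levelOne
      set M := (K * (G.index : ℤ)).toNat / 12 + 1 with hM
      refine lt_of_lt_of_le (b := (M : ℕ∞)) (by rw [hidx]; exact_mod_cast Nat.lt_succ_self _) ?_
      refine order_of_decay _ M ?_
      rw [ModularForm.coe_norm]
      letI := Fintype.ofFinite ((Matrix.SpecialLinearGroup.mapGL (R := ℤ) (n := Fin 2) ℝ).range ⧸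
        (G.map (Matrix.SpecialLinearGroup.mapGL ℝ)).subgroupOf
          (Matrix.SpecialLinearGroup.mapGL ℝ).range)
      classical
      have hd := decay_of_coeff f a ha M (by
        intro n hn
        apply h0
        have h1 : n * 12 ≤ (K * (G.index : ℤ)).toNat := by omega
        have h2 : ((n * 12 : ℕ) : ℤ) ≤ K * (G.index : ℤ) := by
          rw [← Int.toNat_of_nonneg (a := K * (G.index : ℤ)) (by positivity)]
          exact_mod_cast h1
        have h3 : (n : ℝ) * 12 ≤ K * G.index := by exact_mod_cast h2
        linarith)
      rw [← Finset.mul_prod_erase _ _ (Finset.mem_univ (⟦1⟧ : _ ⧸ _))]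
      have e1 : SlashInvariantForm.quotientFunc f (⟦1⟧ : ((Matrix.SpecialLinearGroup.mapGL (R := ℤ) (n := Fin 2) ℝ).range ⧸
        (G.map (Matrix.SpecialLinearGroup.mapGL ℝ)).subgroupOf
          (Matrix.SpecialLinearGroup.mapGL ℝ).range)) = f := by
        rw [SlashInvariantForm.quotientFunc_mk]; simp
      rw [e1]
      have e2 : (∏ x ∈ Finset.univ.erase (⟦1⟧ : ((Matrix.SpecialLinearGroup.mapGL (R := ℤ) (n := Fin 2) ℝ).range ⧸
        (G.map (Matrix.SpecialLinearGroup.mapGL ℝ)).subgroupOf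
          (Matrix.SpecialLinearGroup.mapGL ℝ).range)), SlashInvariantForm.quotientFunc f x)
          =O[atImInfty] (fun _ => (1 : ℝ)) := by
        have : (fun _ : ℍ => (1 : ℝ)) = (fun x ↦ ∏ i ∈ Finset.univ.erase (⟦1⟧ : ((Matrix.SpecialLinearGroup.mapGL (R := ℤ) (n := Fin 2) ℝ).range ⧸
          (G.map (Matrix.SpecialLinearGroup.mapGL ℝ)).subgroupOf
          (Matrix.SpecialLinearGroup.mapGL ℝ).range)), 1) := by ext; simp
        rw [this, Finset.prod_fn]
        exact .finsetProd fun q _ => hbd q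
      have e3 := hd.mul e2
      simp only [mul_one] at e3
      exact e3
    have := (ModularForm.norm_eq_zero_iff _ _).1 hn
    exact DFunLike.coe_injective this
  have h2 := ModularFormClass.qExpansion_coeff_unique one_pos hper ha n
  rw [h2, hf]
  rw [show ((0 : ModularForm (G.map (Matrix.SpecialLinearGroup.mapGL ℝ)) K) : ℍ → ℂ) = 0 from rfl,
    qExpansion_zero]
  simp

end SturmGeneral

section Moments

/-- the term of the Fourier expansion -/
noncomputable def jterm (c : ℤ × ℤ → ℂ) (τ z : ℂ) (p : ℤ × ℤ) : ℂ :=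
  c p * Complex.exp (2 * Real.pi * Complex.I * ((p.1 : ℂ) * τ + (p.2 : ℂ) * z))

noncomputable def jPhi (c : ℤ × ℤ → ℂ) (j : ℕ) (τ z : ℂ) : ℂ :=
  ∑' p : ℤ × ℤ, (p.2 : ℂ) ^ j * jterm c τ z p

lemma jterm_add (c : ℤ × ℤ → ℂ) (τ z w : ℂ) (p : ℤ × ℤ) :
    jterm c τ (z + w) p = jterm c τ z p * Complex.exp (2 * Real.pi * Complex.I * p.2 * w) := by
  rw [jterm, jterm, mul_assoc (c p), ← Complex.exp_add]
  congr 2; ring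

lemma jterm_summable_exp (c : ℤ × ℤ → ℂ)
    (habs : ∀ τ z : ℂ, 0 < τ.im → Summable fun p => ‖jterm c τ z p‖)
    (τ z : ℂ) (hτ : 0 < τ.im) (R : ℝ) :
    Summable fun p : ℤ × ℤ => ‖jterm c τ z p‖ * Real.exp (2 * Real.pi * |(p.2 : ℝ)| * R) := by
  have key : ∀ R : ℝ, ∀ p : ℤ × ℤ, ‖jterm c τ (z + (-(R : ℂ) * Complex.I)) p‖ =
      ‖jterm c τ z p‖ * Real.exp (2 * Real.pi * p.2 * R) := by
    intro R p
    rw [jterm_add, norm_mul, Complex.norm_exp]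
    congr 2
    have : 2 * (Real.pi : ℂ) * Complex.I * p.2 * (-(R : ℂ) * Complex.I) =
        ((2 * Real.pi * p.2 * R : ℝ) : ℂ) := by
      push_cast
      linear_combination (-2 * (Real.pi : ℂ) * p.2 * R) * Complex.I_mul_I
    rw [this, Complex.ofReal_re]
  refine Summable.of_nonneg_of_le (fun p => by positivity) (fun p => ?_)
    ((habs τ (z + (-(R : ℂ) * Complex.I)) hτ).add (habs τ (z + (-((-R : ℝ) : ℂ) * Complex.I)) hτ))
  rw [key, key, ← mul_add]
  refine mul_le_mul_of_nonneg_left ?_ (norm_nonneg _)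
  rcases abs_choice (p.2 : ℝ) with h | h <;> rw [h]
  · linarith [Real.exp_pos (2 * Real.pi * p.2 * -R)]
  · have : 2 * Real.pi * -(p.2 : ℝ) * R = 2 * Real.pi * p.2 * -R := by ring
    rw [this]
    linarith [Real.exp_pos (2 * Real.pi * p.2 * R)]

lemma jterm_summable_moment (c : ℤ × ℤ → ℂ)
    (habs : ∀ τ z : ℂ, 0 < τ.im → Summable fun p => ‖jterm c τ z p‖)
    (τ z : ℂ) (hτ : 0 < τ.im) (j : ℕ) :
    Summable fun p : ℤ × ℤ => ‖(p.2 : ℂ) ^ j * jterm c τ z p‖ := by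
  refine Summable.of_nonneg_of_le (fun p => norm_nonneg _) (fun p => ?_)
    ((jterm_summable_exp c habs τ z hτ 1).mul_left (j.factorial : ℝ))
  rw [norm_mul, mul_comm, mul_left_comm]
  refine mul_le_mul_of_nonneg_left ?_ (norm_nonneg _)
  have h1 := Real.pow_div_factorial_le_exp (|(p.2 : ℝ)|) (abs_nonneg _) j
  rw [div_le_iff₀ (by positivity)] at h1
  have h2 : Real.exp |(p.2 : ℝ)| ≤ Real.exp (2 * Real.pi * |(p.2 : ℝ)| * 1) := by
    apply Real.exp_le_exp.2
    nlinarith [Real.pi_gt_three, abs_nonneg (p.2 : ℝ)]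
  rw [norm_pow, Complex.norm_intCast]
  nlinarith [Nat.cast_pos (α := ℝ).2 j.factorial_pos]

lemma jPhi_hasSum (c : ℤ × ℤ → ℂ)
    (habs : ∀ τ z : ℂ, 0 < τ.im → Summable fun p => ‖jterm c τ z p‖)
    (τ z : ℂ) (hτ : 0 < τ.im) (j : ℕ) :
    HasSum (fun p : ℤ × ℤ => (p.2 : ℂ) ^ j * jterm c τ z p) (jPhi c j τ z) :=
  (jterm_summable_moment c habs τ z hτ j).of_norm.hasSum

lemma jPhi_expansion (c : ℤ × ℤ → ℂ) (g : ℂ → ℂ → ℂ)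
    (habs : ∀ τ z : ℂ, 0 < τ.im → Summable fun p => ‖jterm c τ z p‖)
    (hsum : ∀ τ z : ℂ, 0 < τ.im → HasSum (jterm c τ z) (g τ z))
    (τ z : ℂ) (hτ : 0 < τ.im) (w : ℂ) :
    HasSum (fun i : ℕ => ((2 * Real.pi * Complex.I) ^ i / (i.factorial : ℂ) * jPhi c i τ z) * w ^ i)
      (g τ (z + w)) := by
  set F : (ℤ × ℤ) × ℕ → ℂ := fun x => jterm c τ z x.1 *
    ((2 * Real.pi * Complex.I * x.1.2 * w) ^ x.2 / (x.2.factorial : ℂ)) with hF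
  have hexp : ∀ p : ℤ × ℤ, HasSum (fun i => F (p, i)) (jterm c τ (z + w) p) := by
    intro p
    rw [jterm_add]
    have := (NormedSpace.expSeries_div_hasSum_exp (𝔸 := ℂ)
      (2 * Real.pi * Complex.I * p.2 * w)).mul_left (jterm c τ z p)
    rw [← Complex.exp_eq_exp_ℂ] at this
    exact this
  have hnexp : ∀ p : ℤ × ℤ, HasSum (fun i => ‖F (p, i)‖)
      (‖jterm c τ z p‖ * Real.exp (2 * Real.pi * |(p.2 : ℝ)| * ‖w‖)) := by
    intro p
    simp only [hF, norm_mul, norm_div, norm_pow]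
    have := (NormedSpace.expSeries_div_hasSum_exp (𝔸 := ℝ)
      (2 * Real.pi * |(p.2 : ℝ)| * ‖w‖)).mul_left ‖jterm c τ z p‖
    rw [← Real.exp_eq_exp_ℝ] at this
    refine this.congr_fun ?_ |> id
    intro i
    simp [abs_of_pos Real.pi_pos]
  have hFs : Summable F := by
    apply Summable.of_norm
    rw [summable_prod_of_nonneg (fun _ => norm_nonneg _)]
    refine ⟨fun p => (hnexp p).summable, ?_⟩
    refine (jterm_summable_exp c habs τ z hτ ‖w‖).congr fun p => ?_
    exact (hnexp p).tsum_eq.symm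
  have h1 : HasSum (jterm c τ (z + w)) (∑' x, F x) := hFs.hasSum.prod_fiberwise hexp
  have h2 : HasSum (F ∘ Equiv.prodComm ℕ (ℤ × ℤ)) (g τ (z + w)) := by
    rw [Equiv.hasSum_iff, (hsum τ (z + w) hτ).unique h1]
    exact hFs.hasSum
  refine h2.prod_fiberwise fun i => ?_
  have h3 := (jPhi_hasSum c habs τ z hτ i).mul_left ((2 * Real.pi * Complex.I) ^ i / (i.factorial : ℂ) * w ^ i)
  rw [mul_right_comm]
  refine h3.congr_fun ?_ |> id
  intro p
  change jterm c τ z p * ((2 * Real.pi * Complex.I * p.2 * w) ^ i / (i.factorial : ℂ)) = _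
  rw [mul_pow, mul_pow _ (p.2 : ℂ)]
  ring

end Moments

section Transf
open UpperHalfPlane
open scoped MatrixGroups

lemma jalpha_cancel (i : ℕ) : (2 * Real.pi * Complex.I) ^ i / (i.factorial : ℂ) ≠ 0 :=
  div_ne_zero (pow_ne_zero _ Complex.two_pi_I_ne_zero) (by exact_mod_cast i.factorial_ne_zero)

lemma jPhi_trans1 (k m : ℤ) (c : ℤ × ℤ → ℂ) (g : ℂ → ℂ → ℂ)
    (habs : ∀ τ z : ℂ, 0 < τ.im → Summable fun p => ‖jterm c τ z p‖)
    (hsum : ∀ τ z : ℂ, 0 < τ.im → HasSum (jterm c τ z) (g τ z))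
    (τ τ' : ℂ) (hτ : 0 < τ.im) (hτ' : 0 < τ'.im) (C D : ℂ)
    (hD0 : D ≠ 0)
    (ht : ∀ z : ℂ, g τ' (z / D) =
      D ^ k * Complex.exp (2 * Real.pi * Complex.I * (m : ℂ) * C * z ^ 2 / D) * g τ z)
    (z₀ : ℂ) (j : ℕ) (h0 : ∀ i < j, jPhi c i τ' z₀ = 0) :
    jPhi c j τ' z₀ =
      D ^ (k + j) * Complex.exp (2 * Real.pi * Complex.I * (m : ℂ) * C * D * z₀ ^ 2) *
        jPhi c j τ (D * z₀) := by
  have key := power_transfer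
    (fun i => (2 * Real.pi * Complex.I) ^ i / (i.factorial : ℂ) * jPhi c i τ' z₀)
    (fun i => (2 * Real.pi * Complex.I) ^ i / (i.factorial : ℂ) * jPhi c i τ (D * z₀))
    (fun w => g τ' (z₀ + w)) (fun w => g τ (D * z₀ + w))
    (fun w => D ^ k *
      Complex.exp (2 * Real.pi * Complex.I * (m : ℂ) * C * D * (z₀ + w) ^ 2)) D hD0
    (fun w => jPhi_expansion c g habs hsum _ _ hτ' w)
    (fun w => jPhi_expansion c g habs hsum _ _ hτ w)
    (by fun_prop) (fun w => mul_ne_zero (zpow_ne_zero _ hD0) (Complex.exp_ne_zero _))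
    (fun w => by
      have := ht (D * (z₀ + w))
      rw [mul_div_cancel_left₀ _ hD0] at this
      beta_reduce
      rw [this, mul_add]
      congr 3
      field_simp)
    j (fun i hi => by simp [h0 i hi])
  simp only [add_zero] at key
  apply mul_left_cancel₀ (jalpha_cancel j)
  rw [key, zpow_add₀ hD0, zpow_natCast]
  ring

lemma jPhi_trans2 (m : ℤ) (c : ℤ × ℤ → ℂ) (g : ℂ → ℂ → ℂ)
    (habs : ∀ τ z : ℂ, 0 < τ.im → Summable fun p => ‖jterm c τ z p‖)
    (hsum : ∀ τ z : ℂ, 0 < τ.im → HasSum (jterm c τ z) (g τ z))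
    (τ : ℍ) (lam mu : ℤ)
    (ht : ∀ z : ℂ, g τ (z + (lam : ℂ) * τ + (mu : ℂ)) =
        Complex.exp (2 * Real.pi * Complex.I *
            (-(m : ℂ) * (lam : ℂ) ^ 2 * τ - 2 * (m : ℂ) * (lam : ℂ) * z)) * g τ z)
    (z₀ : ℂ) (j : ℕ) (h0 : ∀ i < j, jPhi c i τ z₀ = 0) :
    jPhi c j τ (z₀ + (lam : ℂ) * τ + (mu : ℂ)) = Complex.exp (2 * Real.pi * Complex.I *
            (-(m : ℂ) * (lam : ℂ) ^ 2 * τ - 2 * (m : ℂ) * (lam : ℂ) * z₀)) * jPhi c j τ z₀ := by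
  have key := power_transfer
    (fun i => (2 * Real.pi * Complex.I) ^ i / (i.factorial : ℂ) * jPhi c i τ z₀)
    (fun i => (2 * Real.pi * Complex.I) ^ i / (i.factorial : ℂ) *
      jPhi c i τ (z₀ + (lam : ℂ) * τ + (mu : ℂ)))
    (fun w => g τ (z₀ + w)) (fun w => g τ (z₀ + (lam : ℂ) * τ + (mu : ℂ) + w))
    (fun w => Complex.exp (-(2 * Real.pi * Complex.I *
            (-(m : ℂ) * (lam : ℂ) ^ 2 * τ - 2 * (m : ℂ) * (lam : ℂ) * (z₀ + w))))) 1 one_ne_zero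
    (fun w => jPhi_expansion c g habs hsum _ _ τ.im_pos w)
    (fun w => jPhi_expansion c g habs hsum _ _ τ.im_pos w)
    (by fun_prop) (fun w => Complex.exp_ne_zero _)
    (fun w => by
      have := ht (z₀ + w)
      simp only [one_mul]
      rw [show z₀ + (lam : ℂ) * τ + (mu : ℂ) + w = z₀ + w + (lam : ℂ) * τ + (mu : ℂ) by ring,
        this, ← mul_assoc, ← Complex.exp_add, neg_add_cancel, Complex.exp_zero, one_mul])
    j (fun i hi => by simp [h0 i hi])
  simp only [add_zero, one_pow, one_mul] at key
  apply mul_left_cancel₀ (jalpha_cancel j)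
  rw [mul_left_comm, key, ← mul_assoc, ← Complex.exp_add, add_neg_cancel, Complex.exp_zero, one_mul]

end Transf

section Analytic
open UpperHalfPlane

lemma jterm_norm (c : ℤ × ℤ → ℂ) (τ : ℂ) (x b : ℝ) (p : ℤ × ℤ) :
    ‖jterm c τ ((x : ℂ) * τ + b) p‖ =
      ‖c p‖ * Real.exp (-(2 * Real.pi * (p.1 + p.2 * x) * τ.im)) := by
  rw [jterm, norm_mul, Complex.norm_exp]
  congr 2
  simp
  ring

lemma jPhi_bdd (m : ℤ) (hm : 0 < m) (c : ℤ × ℤ → ℂ)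
    (habs : ∀ τ z : ℂ, 0 < τ.im → Summable fun p => ‖jterm c τ z p‖)
    (hsupp : ∀ n ρ : ℤ, 4 * n * m - ρ ^ 2 < 0 → c (n, ρ) = 0) (j : ℕ) (x b : ℝ) :
    ∃ B : ℝ, ∀ τ : ℂ, 1 ≤ τ.im →
      ‖Complex.exp (2 * Real.pi * Complex.I * m * x * ((x : ℂ) * τ + b)) *
        jPhi c j τ ((x : ℂ) * τ + b)‖ ≤ B := by
  have hs := (jterm_summable_moment c habs Complex.I ((x : ℂ) * Complex.I + (0 : ℝ))
    (by simp) j).mul_left (Real.exp (-(2 * Real.pi * (m * x ^ 2))))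
  obtain ⟨B, hB⟩ := hs
  refine ⟨B, fun τ hτ => ?_⟩
  · have hτ0 : 0 < τ.im := by linarith
    rw [jPhi, ← tsum_mul_left]
    refine tsum_of_norm_bounded hB fun p => ?_
    have he : ‖Complex.exp (2 * Real.pi * Complex.I * m * x * ((x : ℂ) * τ + b))‖ =
        Real.exp (-(2 * Real.pi * (m * x ^ 2) * τ.im)) := by
      rw [Complex.norm_exp]
      congr 1
      simp
      ring
    rw [norm_mul, norm_mul, norm_mul, he, jterm_norm, jterm_norm]
    by_cases hc : c p = 0
    · simp [hc]
    have hn : 0 ≤ 4 * p.1 * m - p.2 ^ 2 := by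
      by_contra h
      exact hc (hsupp p.1 p.2 (not_le.1 h))
    have hn' : (0 : ℝ) ≤ 4 * p.1 * m - p.2 ^ 2 := by exact_mod_cast hn
    have hm' : (0 : ℝ) < m := by exact_mod_cast hm
    have hQ : 0 ≤ m * x ^ 2 + (p.1 + p.2 * x) := by
      have : 0 ≤ 4 * m * (m * x ^ 2 + (p.1 + p.2 * x)) := by
        nlinarith [sq_nonneg (p.2 + 2 * m * x)]
      by_contra h
      nlinarith
    have e1 : ∀ y : ℝ, Real.exp (-(2 * Real.pi * (m * x ^ 2) * y)) * (‖(p.2 : ℂ) ^ j‖ *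
        (‖c p‖ * Real.exp (-(2 * Real.pi * (p.1 + p.2 * x) * y)))) =
        ‖(p.2 : ℂ) ^ j‖ * ‖c p‖ * Real.exp (-(2 * Real.pi * (m * x ^ 2 + (p.1 + p.2 * x)) * y)) := by
      intro y
      rw [show -(2 * Real.pi * (m * x ^ 2 + (p.1 + p.2 * x)) * y) =
        -(2 * Real.pi * (m * x ^ 2) * y) + -(2 * Real.pi * (p.1 + p.2 * x) * y) by ring, Real.exp_add]
      ring
    have e2 := e1 1
    rw [mul_one (2 * Real.pi * (m * x ^ 2))] at e2
    rw [Complex.I_im, e1, e2]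
    refine mul_le_mul_of_nonneg_left (Real.exp_le_exp.2 ?_) (by positivity)
    have : 0 ≤ 2 * Real.pi * (m * x ^ 2 + (p.1 + p.2 * x)) := by positivity
    nlinarith

lemma jPhi_diff (m : ℤ) (hm : 0 < m) (c : ℤ × ℤ → ℂ)
    (habs : ∀ τ z : ℂ, 0 < τ.im → Summable fun p => ‖jterm c τ z p‖)
    (hsupp : ∀ n ρ : ℤ, 4 * n * m - ρ ^ 2 < 0 → c (n, ρ) = 0) (j : ℕ) (b : ℝ) :
    DifferentiableOn ℂ (fun τ => jPhi c j τ b) {τ : ℂ | 0 < τ.im} := by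
  intro τ hτ
  have hτ' : 0 < τ.im := hτ
  set t := τ.im / 2 with ht
  have ht0 : 0 < t := by positivity
  have hs := jterm_summable_moment c habs ((t : ℂ) * Complex.I) ((0 : ℝ) * ((t : ℂ) * Complex.I) + b)
    (by simpa using ht0) j
  have hU : IsOpen {τ : ℂ | t < τ.im} := isOpen_lt continuous_const Complex.continuous_im
  have hd : DifferentiableOn ℂ (fun τ => jPhi c j τ b) {τ : ℂ | t < τ.im} := by
    unfold jPhi
    refine Complex.differentiableOn_tsum_of_summable_norm hs (fun p => ?_) hU (fun p w hw => ?_)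
    · unfold jterm
      fun_prop
    · have hw' : t < w.im := hw
      have h2 := jterm_norm c w 0 b p
      rw [Complex.ofReal_zero, zero_mul, zero_add] at h2
      rw [norm_mul, norm_mul, jterm_norm, h2]
      refine mul_le_mul_of_nonneg_left ?_ (norm_nonneg _)
      by_cases hc : c p = 0
      · simp [hc]
      have hn : 0 ≤ 4 * p.1 * m - p.2 ^ 2 := by
        by_contra h
        exact hc (hsupp p.1 p.2 (not_le.1 h))
      have hn' : 0 ≤ p.1 := by
        by_contra h
        nlinarith [sq_nonneg p.2]
      have hn2 : (0 : ℝ) ≤ p.1 := by exact_mod_cast hn'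
      refine mul_le_mul_of_nonneg_left (Real.exp_le_exp.2 ?_) (norm_nonneg _)
      have : 0 ≤ 2 * Real.pi * p.1 := by positivity
      simp
      nlinarith
  exact (hd.differentiableAt (hU.mem_nhds (show t < τ.im by rw [ht]; linarith))).differentiableWithinAt

/-- coefficient -/
noncomputable def jcoef (c : ℤ × ℤ → ℂ) (j : ℕ) (z : ℂ) (n : ℤ) : ℂ :=
  ∑ᶠ ρ : ℤ, (ρ : ℂ) ^ j * c (n, ρ) * Complex.exp (2 * Real.pi * Complex.I * ρ * z)

lemma jPhi_qexp (m : ℤ) (hm : 0 < m) (c : ℤ × ℤ → ℂ)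
    (habs : ∀ τ z : ℂ, 0 < τ.im → Summable fun p => ‖jterm c τ z p‖)
    (hsupp : ∀ n ρ : ℤ, 4 * n * m - ρ ^ 2 < 0 → c (n, ρ) = 0)
    (hfin : ∀ n : ℤ, {ρ : ℤ | c (n, ρ) ≠ 0}.Finite) (j : ℕ) (z : ℂ) (τ : ℍ) :
    HasSum (fun n : ℕ => jcoef c j z n • Function.Periodic.qParam 1 τ ^ n) (jPhi c j τ z) := by
  have h1 := jPhi_hasSum c habs τ z τ.im_pos j
  have h2 : HasSum (fun n : ℤ => jcoef c j z n * Complex.exp (2 * Real.pi * Complex.I * (n * τ)))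
      (jPhi c j τ z) := by
    refine h1.prod_fiberwise fun n => ?_
    have h3 : HasSum (fun ρ : ℤ => (ρ : ℂ) ^ j * c (n, ρ) *
        Complex.exp (2 * Real.pi * Complex.I * ρ * z)) (jcoef c j z n) := by
      have hsub : Function.support (fun ρ : ℤ => (ρ : ℂ) ^ j * c (n, ρ) *
        Complex.exp (2 * Real.pi * Complex.I * ρ * z)) ⊆ (hfin n).toFinset := by
        intro ρ hρ
        rw [Function.mem_support] at hρ
        simp only [Set.Finite.coe_toFinset, Set.mem_ofPred_eq]
        intro h
        simp [h] at hρ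
      rw [jcoef, finsum_eq_sum_of_support_subset _ hsub]
      refine hasSum_sum_of_ne_finset_zero fun ρ hρ => ?_
      by_contra h
      exact hρ (hsub h)
    refine (h3.mul_right (Complex.exp (2 * Real.pi * Complex.I * (n * τ)))).congr_fun ?_ |> id
    intro ρ
    simp only [jterm]
    rw [mul_add, Complex.exp_add, mul_assoc (2 * (Real.pi : ℂ) * Complex.I) ρ z]
    ring
  have h4 := (Function.Injective.hasSum_iff (Nat.cast_injective (R := ℤ)) (fun n hn => ?_)).2 h2
  · refine h4.congr_fun ?_ |> id
    intro n
    simp only [Function.comp, Function.Periodic.qParam, smul_eq_mul, ← Complex.exp_nat_mul]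
    congr 2
    push_cast
    ring
  · have hn0 : n < 0 := by
      by_contra h
      exact hn ⟨n.toNat, Int.toNat_of_nonneg (not_lt.1 h)⟩
    have : jcoef c j z n = 0 := by
      rw [jcoef]
      refine finsum_eq_zero_of_forall_eq_zero fun ρ => ?_
      rw [hsupp n ρ (by nlinarith [sq_nonneg ρ])]
      simp
    rw [this, zero_mul]

end Analytic

section Final
open UpperHalfPlane
open scoped MatrixGroups ModularForm

lemma gammaRM_finiteIndex (r m : ℤ) (hr : 0 < r) : (GammaRM r m).FiniteIndex := by
  have hN : NeZero (r.natAbs ^ 2) := ⟨pow_ne_zero _ (by omega)⟩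
  refine Subgroup.finiteIndex_of_le (H := CongruenceSubgroup.Gamma (r.natAbs ^ 2)) ?_
  intro γ hγ
  rw [CongruenceSubgroup.Gamma_mem] at hγ
  obtain ⟨h1, -, h3, h4⟩ := hγ
  have hc : ((r.natAbs ^ 2 : ℕ) : ℤ) = r ^ 2 := by simp
  have e1 : γ 0 0 ≡ 1 [ZMOD r ^ 2] := by
    rw [← hc, ← ZMod.intCast_eq_intCast_iff, h1]; simp
  have e3 : γ 1 0 ≡ 0 [ZMOD r ^ 2] := by
    rw [← hc, ← ZMod.intCast_eq_intCast_iff, h3]; simp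
  have e4 : γ 1 1 ≡ 1 [ZMOD r ^ 2] := by
    rw [← hc, ← ZMod.intCast_eq_intCast_iff, h4]; simp
  have hd : r ∣ r ^ 2 := dvd_pow_self r two_ne_zero
  refine ⟨e1.of_dvd hd, e4.of_dvd hd, e3.of_dvd hd, ?_⟩
  simpa using e3.mul_right m

lemma gammaRM_T (r m : ℤ) : ModularGroup.T ∈ GammaRM r m := by
  refine ⟨?_, ?_, ?_, ?_⟩ <;> simp [ModularGroup.T]

lemma jfactor_one (r m s a : ℤ) (hr : 0 < r) (C d lam : ℤ) (hlam : C * s = r * lam)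
    (ha : C * m = r ^ 2 * a) (τ D z₀ : ℂ) (hD : D = C * τ + d) (hz : z₀ = (s : ℂ) / r) :
    Complex.exp (2 * Real.pi * Complex.I * (m : ℂ) * (C : ℂ) * D * z₀ ^ 2) *
      Complex.exp (2 * Real.pi * Complex.I *
            (-(m : ℂ) * (lam : ℂ) ^ 2 * τ - 2 * (m : ℂ) * (lam : ℂ) * z₀)) = 1 := by
  have hr' : (r : ℂ) ≠ 0 := by exact_mod_cast hr.ne'
  have h1 : (lam : ℂ) = C * z₀ := by
    rw [hz]; field_simp
    have : (C : ℂ) * s = r * lam := by exact_mod_cast hlam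
    linear_combination -this
  have h2 : (C : ℂ) * m = r ^ 2 * a := by exact_mod_cast ha
  have h3 : (s : ℂ) = r * z₀ := by rw [hz]; field_simp
  rw [← Complex.exp_add, Complex.exp_eq_one_iff]
  refine ⟨a * s ^ 2 * (d - 2), ?_⟩
  push_cast
  rw [h1, hD, h3]
  linear_combination (2 * Real.pi * Complex.I * z₀ ^ 2 * (d - 2)) * h2

theorem jPhi_vanish (k : ℤ) (m : ℤ) (hm : 0 < m) (r : ℤ) (hr : 0 < r) (s : ℤ)
    (g : ℂ → ℂ → ℂ)
    (transf₁ : ∀ γ : SL(2, ℤ), ∀ τ z : ℂ, 0 < τ.im →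
      g (((γ 0 0 : ℂ) * τ + (γ 0 1 : ℂ)) / ((γ 1 0 : ℂ) * τ + (γ 1 1 : ℂ)))
        (z / ((γ 1 0 : ℂ) * τ + (γ 1 1 : ℂ))) =
      ((γ 1 0 : ℂ) * τ + (γ 1 1 : ℂ)) ^ k *
        Complex.exp (2 * Real.pi * Complex.I * (m : ℂ) * (γ 1 0 : ℂ) * z ^ 2 /
          ((γ 1 0 : ℂ) * τ + (γ 1 1 : ℂ))) * g τ z)
    (transf₂ : ∀ lam mu : ℤ, ∀ τ z : ℂ, 0 < τ.im →
      g τ (z + (lam : ℂ) * τ + (mu : ℂ)) =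
        Complex.exp (2 * Real.pi * Complex.I *
            (-(m : ℂ) * (lam : ℂ) ^ 2 * τ - 2 * (m : ℂ) * (lam : ℂ) * z)) * g τ z)
    (c : ℤ × ℤ → ℂ)
    (habs : ∀ τ z : ℂ, 0 < τ.im → Summable fun p => ‖jterm c τ z p‖)
    (hsum : ∀ τ z : ℂ, 0 < τ.im → HasSum (jterm c τ z) (g τ z))
    (hsupp : ∀ n ρ : ℤ, 4 * n * m - ρ ^ 2 < 0 → c (n, ρ) = 0)
    (hfin : ∀ n : ℤ, {ρ : ℤ | c (n, ρ) ≠ 0}.Finite)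
    (j : ℕ) (hprev : ∀ i < j, ∀ τ : ℍ, jPhi c i τ ((s : ℂ) / r) = 0)
    (h0 : ∀ n : ℕ, (n : ℝ) ≤ ((k : ℝ) + j) / 12 * ((GammaRM r m).index : ℝ) →
      jcoef c j ((s : ℂ) / r) n = 0) (n : ℕ) : jcoef c j ((s : ℂ) / r) n = 0 := by
  have := gammaRM_finiteIndex r m hr
  set z₀ : ℂ := (s : ℂ) / r with hz₀
  have hz₀r : z₀ = ((s / r : ℝ) : ℂ) := by rw [hz₀]; push_cast; rfl
  have hr' : (r : ℂ) ≠ 0 := by exact_mod_cast hr.ne'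
  set f : ℍ → ℂ := fun τ => jPhi c j τ z₀ with hf
  have hden : ∀ (γ : SL(2, ℤ)) (τ : ℍ), (γ 1 0 : ℂ) * τ + (γ 1 1 : ℂ) ≠ 0 := by
    intro γ τ
    rw [← ModularGroup.denom_apply]
    exact denom_ne_zero _ _
  have htr : ∀ (γ : SL(2, ℤ)) (τ : ℍ), f (γ • τ) =
      ((γ 1 0 : ℂ) * τ + (γ 1 1 : ℂ)) ^ (k + j) *
        Complex.exp (2 * Real.pi * Complex.I * (m : ℂ) * (γ 1 0 : ℂ) *
          ((γ 1 0 : ℂ) * τ + (γ 1 1 : ℂ)) * z₀ ^ 2) *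
        jPhi c j τ (((γ 1 0 : ℂ) * τ + (γ 1 1 : ℂ)) * z₀) := by
    intro γ τ
    refine jPhi_trans1 k m c g habs hsum τ ((γ • τ : ℍ) : ℂ) τ.im_pos (γ • τ).im_pos _ _
      (hden γ τ) ?_ z₀ j (fun i hi => hprev i hi _)
    intro z
    have := transf₁ γ τ z τ.im_pos
    rw [coe_specialLinearGroup_apply]
    simpa using this
  have hsl : ∀ (γ : SL(2, ℤ)) (τ : ℍ), (f ∣[k + (j : ℤ)] γ) τ =
      Complex.exp (2 * Real.pi * Complex.I * (m : ℂ) * (γ 1 0 : ℂ) *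
          ((γ 1 0 : ℂ) * τ + (γ 1 1 : ℂ)) * z₀ ^ 2) *
        jPhi c j τ (((γ 1 0 : ℂ) * τ + (γ 1 1 : ℂ)) * z₀) := by
    intro γ τ
    rw [ModularForm.SL_slash_apply, htr, ModularGroup.denom_apply, zpow_neg]
    have := zpow_ne_zero (k + (j : ℤ)) (hden γ τ)
    field_simp
  have hinv : ∀ γ ∈ GammaRM r m, f ∣[k + (j : ℤ)] γ = f := by
    intro γ hγ
    obtain ⟨-, hγ2, hγ3, hγ4⟩ := hγ
    ext τ
    rw [hsl]
    obtain ⟨l, hl⟩ := (Int.modEq_zero_iff_dvd).1 hγ3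
    obtain ⟨a, ha⟩ := (Int.modEq_zero_iff_dvd).1 hγ4
    obtain ⟨u, hu⟩ := hγ2.symm.dvd
    have e1 : ((γ 1 0 : ℂ) * τ + (γ 1 1 : ℂ)) * z₀ = z₀ + ((l * s : ℤ) : ℂ) * τ + ((u * s : ℤ) : ℂ) := by
      have hl' : (γ 1 0 : ℂ) = r * l := by exact_mod_cast hl
      have hu' : (γ 1 1 : ℂ) - 1 = r * u := by exact_mod_cast hu
      have h3 : (s : ℂ) = r * z₀ := by rw [hz₀]; field_simp
      push_cast
      rw [h3]
      linear_combination (τ * z₀) * hl' + z₀ * hu'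
    rw [e1, jPhi_trans2 m c g habs hsum τ (l * s) (u * s) (fun z => transf₂ _ _ _ z τ.im_pos) z₀ j
      (fun i hi => hprev i hi _), ← mul_assoc,
      jfactor_one r m s a hr (γ 1 0) (γ 1 1) (l * s) (by rw [hl]; ring) ha τ _ z₀ rfl hz₀, one_mul]
  have hbdd : ∀ γ : SL(2, ℤ), IsBoundedAtImInfty (f ∣[k + (j : ℤ)] γ) := by
    intro γ
    obtain ⟨B, hB⟩ := jPhi_bdd m hm c habs hsupp j (γ 1 0 * (s / r : ℝ)) (γ 1 1 * (s / r : ℝ))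
    rw [isBoundedAtImInfty_iff]
    refine ⟨B, 1, fun τ hτ => ?_⟩
    have := hB τ hτ
    rw [hsl]
    convert this using 4
    · rw [hz₀r]; push_cast; ring
    · rw [hz₀r]; push_cast; ring
  have hmd : ∀ τ : ℍ, ofComplex (τ : ℂ) = τ := fun τ => ofComplex_apply τ
  let F : ModularForm ((GammaRM r m).map (Matrix.SpecialLinearGroup.mapGL ℝ)) (k + (j : ℤ)) :=
    { toFun := f
      slash_action_eq' := by
        rintro _ ⟨γ, hγ, rfl⟩
        exact hinv γ hγ
      holo' := by
        rw [UpperHalfPlane.mdifferentiable_iff]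
        have hd := jPhi_diff m hm c habs hsupp j (s / r : ℝ)
        rw [← hz₀r] at hd
        refine hd.congr fun τ hτ => ?_
        change jPhi c j (ofComplex τ) z₀ = _
        rw [ofComplex_apply_of_im_pos hτ]
      bdd_at_cusps' := by
        intro x hx
        rw [Subgroup.IsArithmetic.isCusp_iff_isCusp_SL2Z] at hx
        rw [OnePoint.isBoundedAt_iff_forall_SL2Z hx]
        exact fun γ _ => hbdd γ }
  refine sturm_general (GammaRM r m) (gammaRM_T r m) (k + (j : ℤ)) F
    (fun n => jcoef c j z₀ n) (fun τ => jPhi_qexp m hm c habs hsupp hfin j z₀ τ) ?_ n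
  intro n hn
  apply h0
  simpa using hn

end Final

/-- Proposition 5.2: for a Jacobi form `g` of weight `k` and positive
index `m`, with Fourier coefficients `c(n,ρ)` and `qⁿ`-coefficients the Laurent
polynomials `g_n(ζ)`, and for a positive integer `r`, an integer `s` and `ν ≥ 0`:
`(ζ − e(s/r))^ν` divides `g_n(ζ)` in `ℂ[ζ,ζ⁻¹]` for every `n ≥ 0` if and only if
`Σ_ρ ρ^j c(n,ρ) e(ρs/r) = 0` for all `0 ≤ j < ν` and `0 ≤ n ≤ ((k+j)/12)·[SL₂(ℤ):Γ(r,m)]`. -/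
theorem stmt_4 (k : ℤ) (m : ℤ) (hm : 0 < m) (r : ℤ) (hr : 0 < r) (s : ℤ) (ν : ℕ)
    (g : ℂ → ℂ → ℂ)
    (hol : DifferentiableOn ℂ (fun p : ℂ × ℂ => g p.1 p.2) {p : ℂ × ℂ | 0 < p.1.im})
    (transf₁ : ∀ γ : Matrix.SpecialLinearGroup (Fin 2) ℤ, ∀ τ z : ℂ, 0 < τ.im →
      g ((((γ : Matrix (Fin 2) (Fin 2) ℤ) 0 0 : ℂ) * τ + ((γ : Matrix (Fin 2) (Fin 2) ℤ) 0 1 : ℂ)) /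
           (((γ : Matrix (Fin 2) (Fin 2) ℤ) 1 0 : ℂ) * τ + ((γ : Matrix (Fin 2) (Fin 2) ℤ) 1 1 : ℂ)))
        (z / (((γ : Matrix (Fin 2) (Fin 2) ℤ) 1 0 : ℂ) * τ + ((γ : Matrix (Fin 2) (Fin 2) ℤ) 1 1 : ℂ))) =
      (((γ : Matrix (Fin 2) (Fin 2) ℤ) 1 0 : ℂ) * τ + ((γ : Matrix (Fin 2) (Fin 2) ℤ) 1 1 : ℂ)) ^ k *
        Complex.exp (2 * Real.pi * Complex.I * (m : ℂ) * ((γ : Matrix (Fin 2) (Fin 2) ℤ) 1 0 : ℂ) * z ^ 2 /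
          (((γ : Matrix (Fin 2) (Fin 2) ℤ) 1 0 : ℂ) * τ + ((γ : Matrix (Fin 2) (Fin 2) ℤ) 1 1 : ℂ))) *
        g τ z)
    (transf₂ : ∀ lam mu : ℤ, ∀ τ z : ℂ, 0 < τ.im →
      g τ (z + (lam : ℂ) * τ + (mu : ℂ)) =
        Complex.exp (2 * Real.pi * Complex.I *
            (-(m : ℂ) * (lam : ℂ) ^ 2 * τ - 2 * (m : ℂ) * (lam : ℂ) * z)) * g τ z)
    (c : ℤ × ℤ → ℂ)
    (habs : ∀ τ z : ℂ, 0 < τ.im → Summable (fun p : ℤ × ℤ =>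
      ‖c p * Complex.exp (2 * Real.pi * Complex.I * ((p.1 : ℂ) * τ + (p.2 : ℂ) * z))‖))
    (hsum : ∀ τ z : ℂ, 0 < τ.im →
      HasSum (fun p : ℤ × ℤ =>
        c p * Complex.exp (2 * Real.pi * Complex.I * ((p.1 : ℂ) * τ + (p.2 : ℂ) * z)))
        (g τ z))
    (hsupp : ∀ n ρ : ℤ, 4 * n * m - ρ ^ 2 < 0 → c (n, ρ) = 0)
    (gLP : ℤ → LaurentPolynomial ℂ)
    (hgLP : ∀ n ρ : ℤ, (gLP n).coeff ρ = c (n, ρ)) :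
    (∀ n : ℤ, 0 ≤ n →
        (LaurentPolynomial.T 1 -
          LaurentPolynomial.C (Complex.exp (2 * Real.pi * Complex.I * (s : ℂ) / (r : ℂ)))) ^ ν ∣
          gLP n)
    ↔ (∀ j : ℕ, j < ν → ∀ n : ℤ, 0 ≤ n →
        (n : ℝ) ≤ ((k : ℝ) + (j : ℝ)) / 12 * ((GammaRM r m).index : ℝ) →
        ∑ᶠ ρ : ℤ, (ρ : ℂ) ^ j * c (n, ρ) *
          Complex.exp (2 * Real.pi * Complex.I * (ρ : ℂ) * (s : ℂ) / (r : ℂ)) = 0) := by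
  have habs' : ∀ τ z : ℂ, 0 < τ.im → Summable fun p => ‖jterm c τ z p‖ := habs
  have hsum' : ∀ τ z : ℂ, 0 < τ.im → HasSum (jterm c τ z) (g τ z) := hsum
  have hfin : ∀ n : ℤ, {ρ : ℤ | c (n, ρ) ≠ 0}.Finite := by
    intro n
    refine ((gLP n).coeff.support.finite_toSet).subset fun ρ hρ => ?_
    have hρ' : c (n, ρ) ≠ 0 := hρ
    rw [← hgLP] at hρ'
    simpa using hρ'
  have hcoef : ∀ (j : ℕ) (n : ℤ), ∑ᶠ ρ : ℤ, (ρ : ℂ) ^ j * c (n, ρ) *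
      Complex.exp (2 * Real.pi * Complex.I * (ρ : ℂ) * (s : ℂ) / (r : ℂ)) =
      jcoef c j ((s : ℂ) / r) n := by
    intro j n
    rw [jcoef]
    refine finsum_congr fun ρ => ?_
    rw [mul_div_assoc]
  have hmom : ∀ (j : ℕ) (n : ℤ), lpMoment (Complex.exp (2 * Real.pi * Complex.I * (s : ℂ) / (r : ℂ))) j
      (gLP n) = jcoef c j ((s : ℂ) / r) n := by
    intro j n
    rw [lpMoment_eq_finsum, jcoef]
    refine finsum_congr fun ρ => ?_
    rw [hgLP, ← Complex.exp_int_mul]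
    congr 2
    ring
  simp only [lp_dvd_iff _ (Complex.exp_ne_zero _), hmom, hcoef]
  constructor
  · intro h j hj n hn _
    exact h n hn j hj
  · intro h
    have main : ∀ j : ℕ, j < ν → ∀ n : ℕ, jcoef c j ((s : ℂ) / r) n = 0 := by
      intro j
      induction j using Nat.strong_induction_on with
      | _ j ih =>
        intro hj
        refine jPhi_vanish k m hm r hr s g transf₁ transf₂ c habs' hsum' hsupp hfin j ?_ ?_
        · intro i hi τ
          have h1 := jPhi_qexp m hm c habs' hsupp hfin i ((s : ℂ) / r) τ
          simp only [ih i hi (hi.trans hj), zero_smul] at h1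
          exact h1.unique hasSum_zero
        · intro n hn
          exact h j hj n (Int.natCast_nonneg n) (by exact_mod_cast hn)
    intro n hn j hj
    obtain ⟨N, rfl⟩ := Int.eq_ofNat_of_zero_le hn
    exact main j hj N
end

section
/- Let k be an integer and m a positive integer. Let g be a Jacobi cusp form of weight k and index m, with qⁿ-coefficients g_n(ζ). Let ν : ℤ_{>0} → ℤ_{≥0} be finitely supported and set b(ζ) = Π_{r≥1} Φ_r(ζ)^{ν(r)}. If b(ζ) divides g_n(ζ) in ℂ[ζ,ζ⁻¹] for every integer n with 0 ≤ n ≤ max_{r≥1, ν(r)>0} ((k + ν(r) − 1)/12)·r³·Π_{p | r, p prime}(1 − 1/p²), then b(ζ) divides g_n(ζ) in ℂ[ζ,ζ⁻¹] for every n. -/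
open Complex LaurentPolynomial

section PartA
open UpperHalfPlane ModularGroup Filter Topology
open scoped MatrixGroups Manifold ModularForm

lemma jc_maxmod (h : ℍ → ℂ) (hd : DifferentiableOn ℂ (h ∘ ofComplex) {z : ℂ | 0 < z.im})
    (hinv : ∀ (γ : SL(2, ℤ)) (τ : ℍ), ‖h (γ • τ)‖ = ‖h τ‖)
    (hlim : Tendsto h atImInfty (𝓝 0)) : ∀ τ, h τ = 0 := by
  by_contra hne
  push Not at hne
  obtain ⟨τ₀, hτ₀⟩ := hne
  have hpos : 0 < ‖h τ₀‖ := norm_pos_iff.mpr hτ₀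
  have hev : ∀ᶠ τ in atImInfty, ‖h τ‖ < ‖h τ₀‖ := by
    have := hlim.norm
    rw [norm_zero] at this
    exact this.eventually_lt_const hpos
  obtain ⟨B, hB⟩ := (atImInfty_mem _).mp hev
  have hcont : ContinuousOn (h ∘ ofComplex) {z : ℂ | 0 < z.im} := hd.continuousOn
  let K : Set ℂ := Set.Icc (-1 / 2 : ℝ) (1 / 2) ×ℂ Set.Icc (1 / 2 : ℝ) B
  have hK : IsCompact K := isCompact_Icc.reProdIm isCompact_Icc
  have hKsub : K ⊆ {z : ℂ | 0 < z.im} := by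
    intro z hz
    have := hz.2.1
    simp only [Set.mem_ofPred_eq]
    linarith
  have hfd : ∀ τ : ℍ, ‖h τ₀‖ ≤ ‖h τ‖ → ∃ z ∈ K, ‖(h ∘ ofComplex) z‖ = ‖h τ‖ := by
    intro τ hτ
    obtain ⟨γ, hγ⟩ := exists_smul_mem_fd τ
    refine ⟨((γ • τ : ℍ) : ℂ), ?_, ?_⟩
    · have h1 := hγ.2
      have h2 := three_le_four_mul_im_sq_of_mem_fd hγ
      have h3 : (γ • τ).im ≤ B := by
        by_contra hlt
        have := hB (γ • τ) (not_le.mp hlt).le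
        simp only [Set.mem_ofPred_eq] at this
        rw [hinv] at this
        linarith
      have h4 : 0 < (γ • τ).im := (γ • τ).im_pos
      rw [abs_le] at h1
      refine ⟨⟨?_, ?_⟩, ?_, ?_⟩
      · simp only [coe_re]; linarith [h1.1]
      · simp only [coe_re]; linarith [h1.2]
      · simp only [coe_im]; nlinarith
      · simp only [coe_im]; exact h3
    · rw [Function.comp_apply, ofComplex_apply, hinv]
  obtain ⟨z0, hz0, _⟩ := hfd τ₀ le_rfl
  obtain ⟨zm, hzm, hmax⟩ := hK.exists_isMaxOn ⟨z0, hz0⟩ (hcont.mono hKsub).norm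
  have hge : ‖h τ₀‖ ≤ ‖(h ∘ ofComplex) zm‖ := by
    obtain ⟨z, hz, he⟩ := hfd τ₀ le_rfl
    rw [← he]; exact hmax hz
  have hglob : IsMaxOn (norm ∘ (h ∘ ofComplex)) {z : ℂ | 0 < z.im} zm := by
    intro z hz
    simp only [Set.mem_ofPred_eq] at hz ⊢
    have e : (h ∘ ofComplex) z = h ⟨z, hz⟩ := by
      simp [Function.comp, ofComplex_apply_of_im_pos hz]
    show ‖(h ∘ ofComplex) z‖ ≤ ‖(h ∘ ofComplex) zm‖
    rcases le_total ‖h τ₀‖ ‖h ⟨z, hz⟩‖ with hle | hle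
    · obtain ⟨z', hz', he⟩ := hfd _ hle
      rw [e, ← he]; exact hmax hz'
    · rw [e]; exact hle.trans hge
  have hpre : IsPreconnected {z : ℂ | 0 < z.im} := (convex_halfSpace_im_gt 0).isPreconnected
  have hopen : IsOpen {z : ℂ | 0 < z.im} := isOpen_lt continuous_const Complex.continuous_im
  have hconst := Complex.eqOn_of_isPreconnected_of_isMaxOn_norm hpre hopen hd (hKsub hzm) hglob
  have hc2 : ∀ τ : ℍ, h τ = (h ∘ ofComplex) zm := by
    intro τ
    have := hconst (show (τ : ℂ) ∈ {z : ℂ | 0 < z.im} from τ.im_pos)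
    simpa using this
  have : ‖h τ₀‖ < ‖h τ₀‖ := by
    let τ' : ℍ := ⟨(max B 1 : ℝ) * Complex.I, by simp⟩
    have : ‖h τ'‖ < ‖h τ₀‖ := hB τ' (by simp [τ', UpperHalfPlane.im])
    rwa [hc2 τ', ← hc2 τ₀] at this
  exact lt_irrefl _ this

lemma jc_delta_inv (γ : SL(2, ℤ)) (τ : ℍ) :
    ModularForm.discriminant (γ • τ) = denom γ τ ^ (12 : ℤ) * ModularForm.discriminant τ := by
  have h := SlashInvariantForm.slash_action_generators_SL2Z
    ModularForm.discriminant_S_invariant ModularForm.discriminant_T_invariant γ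
  have h2 := congrFun h τ
  rw [ModularForm.SL_slash_apply] at h2
  rw [← h2, mul_left_comm, ← zpow_add₀ (denom_ne_zero γ τ)]
  simp

/-- bottom row modulo `r` -/
def jcCls (r : ℕ) (γ : SL(2, ℤ)) : ZMod r × ZMod r := ((γ 1 0 : ZMod r), (γ 1 1 : ZMod r))

lemma jcCls_mul {r : ℕ} {γ γ' : SL(2, ℤ)} (h : jcCls r γ = jcCls r γ') (δ : SL(2, ℤ)) :
    jcCls r (γ * δ) = jcCls r (γ' * δ) := by
  simp only [jcCls, Prod.mk.injEq, Matrix.SpecialLinearGroup.coe_mul, Matrix.mul_apply,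
    Fin.sum_univ_two] at h ⊢
  push_cast
  rw [h.1, h.2]
  exact ⟨rfl, rfl⟩

lemma jc_prod_zero {ι : Type*} (s : Finset ι) (f : ι → ℍ → ℂ) 
    (hf : ∀ i ∈ s, DifferentiableOn ℂ (f i ∘ ofComplex) {z : ℂ | 0 < z.im})
    (h0 : ∀ τ, ∏ i ∈ s, f i τ = 0) : ∃ i ∈ s, ∀ τ, f i τ = 0 := by
  classical
  have hpre : IsPreconnected {z : ℂ | 0 < z.im} := (convex_halfSpace_im_gt 0).isPreconnected
  have hopen : IsOpen {z : ℂ | 0 < z.im} := isOpen_lt continuous_const Complex.continuous_im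
  induction s using Finset.induction_on with
  | empty => simp at h0
  | insert a s ha ih =>
    have h1 : AnalyticOnNhd ℂ (f a ∘ ofComplex) {z : ℂ | 0 < z.im} :=
      (hf a (by simp)).analyticOnNhd hopen
    have h2 : AnalyticOnNhd ℂ (fun z => ∏ i ∈ s, (f i ∘ ofComplex) z) {z : ℂ | 0 < z.im} := by
      refine DifferentiableOn.analyticOnNhd ?_ hopen
      exact DifferentiableOn.fun_finsetProd (fun i hi => hf i (by simp [hi]))
    have := AnalyticOnNhd.eq_zero_or_eq_zero_of_mul_eq_zero h1 h2 ?_ hpre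
    · rcases this with h | h
      · refine ⟨a, by simp, fun τ => ?_⟩
        simpa using h (τ : ℂ) τ.im_pos
      · obtain ⟨i, hi, hi2⟩ := ih (fun i hi => hf i (by simp [hi])) (fun τ => by
          simpa using h (τ : ℂ) τ.im_pos)
        exact ⟨i, by simp [hi], hi2⟩
    · intro z hz
      have := h0 (ofComplex z)
      rw [Finset.prod_insert ha] at this
      simpa using this

set_option maxHeartbeats 1600000 in
lemma jc_core (F : ℍ → ℂ) (hF : MDiff F) (w : ℤ) (r : ℕ) [NeZero r] (n₀ : ℕ)
    (hcos : ∀ γ γ' : SL(2, ℤ), jcCls r γ = jcCls r γ' → ∀ τ, ‖(F ∣[w] γ) τ‖ = ‖(F ∣[w] γ') τ‖)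
    (hbdd : ∀ γ : SL(2, ℤ), ∃ C : ℝ, ∀ τ : ℍ, 1 ≤ τ.im → ‖(F ∣[w] γ) τ‖ ≤ C)
    (hdec : ∃ C : ℝ, ∀ τ : ℍ, 1 ≤ τ.im → ‖F τ‖ ≤ C * Real.exp (-2 * Real.pi * n₀ * τ.im))
    (hn₀ : ∀ X : ℕ, 1 ≤ X → X ≤ r ^ 2 → w * X < 12 * n₀) : ∀ τ, F τ = 0 := by
  classical
  let Y := Set.range (jcCls r)
  have : Fintype Y := Fintype.ofFinite Y
  let rep : Y → SL(2, ℤ) := fun y => y.2.choose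
  have hrep : ∀ y : Y, jcCls r (rep y) = y.1 := fun y => y.2.choose_spec
  let f : Y → ℍ → ℂ := fun y => F ∣[w] (rep y)
  let P : ℍ → ℂ := fun τ => ∏ y, f y τ
  let X : ℕ := Fintype.card Y
  let D : ℍ → ℂ := ModularForm.discriminant
  let y₀ : Y := ⟨jcCls r 1, ⟨1, rfl⟩⟩
  have hX1 : 1 ≤ X := Fintype.card_pos_iff.mpr ⟨y₀⟩
  have hX2 : X ≤ r ^ 2 := by
    have : Fintype.card Y ≤ Fintype.card (ZMod r × ZMod r) :=
      Fintype.card_le_of_injective _ Subtype.val_injective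
    rw [Fintype.card_prod, ZMod.card] at this
    rw [sq]; exact this
  have hW := hn₀ X hX1 hX2
  have hopen : IsOpen {z : ℂ | 0 < z.im} := isOpen_lt continuous_const Complex.continuous_im
  have hfd : ∀ y, DifferentiableOn ℂ (f y ∘ ofComplex) {z : ℂ | 0 < z.im} := fun y =>
    UpperHalfPlane.mdifferentiable_iff.mp (hF.slash w _)
  have hDd : DifferentiableOn ℂ (D ∘ ofComplex) {z : ℂ | 0 < z.im} :=
    UpperHalfPlane.mdifferentiable_iff.mp CuspForm.discriminant.holo'
  have hfδ : ∀ (δ : SL(2, ℤ)) (τ : ℍ) (γ : SL(2, ℤ)),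
      ‖(F ∣[w] γ) (δ • τ)‖ = ‖denom δ τ‖ ^ w * ‖(F ∣[w] (γ * δ)) τ‖ := by
    intro δ τ γ
    rw [SlashAction.slash_mul, ModularForm.SL_slash_apply (F ∣[w] γ), norm_mul, norm_zpow,
      mul_comm, mul_assoc, ← zpow_add₀ (norm_ne_zero_iff.mpr (denom_ne_zero δ τ))]
    simp
  have hPδ : ∀ (δ : SL(2, ℤ)) (τ : ℍ), ‖P (δ • τ)‖ = ‖denom δ τ‖ ^ (w * X) * ‖P τ‖ := by
    intro δ τ
    let σ : Y → Y := fun y => ⟨jcCls r (rep y * δ), ⟨_, rfl⟩⟩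
    have hσ : Function.Bijective σ := by
      apply Finite.injective_iff_bijective.mp
      intro y y' h
      have h1 : jcCls r (rep y * δ) = jcCls r (rep y' * δ) := congrArg Subtype.val h
      have h2 := jcCls_mul h1 δ⁻¹
      simp only [mul_inv_cancel_right, hrep] at h2
      exact Subtype.ext h2
    have key : ∀ y, ‖f y (δ • τ)‖ = ‖denom δ τ‖ ^ w * ‖f (σ y) τ‖ := by
      intro y
      simp only [f]
      rw [hfδ]
      congr 1
      apply hcos
      rw [hrep]
    simp only [P, norm_prod, key, Finset.prod_mul_distrib, Finset.prod_const, Finset.card_univ]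
    rw [zpow_mul, zpow_natCast]
    congr 1
    exact hσ.prod_comp (fun y => ‖f y τ‖)
  let h : ℍ → ℂ := fun τ => P τ ^ 12 * D τ ^ (-(w * X))
  have hD0 : ∀ τ, D τ ≠ 0 := ModularForm.discriminant_ne_zero
  have hz : ∀ τ, h τ = 0 := by
    apply jc_maxmod
    · have h1 : DifferentiableOn ℂ (P ∘ ofComplex) {z : ℂ | 0 < z.im} :=
        DifferentiableOn.fun_finsetProd (fun i hi => hfd i)
      have h2 : DifferentiableOn ℂ (fun z => (D ∘ ofComplex) z ^ (-(w * X))) {z : ℂ | 0 < z.im} :=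
        hDd.zpow (Or.inl fun z hz => hD0 _)
      exact (h1.pow 12).mul h2
    · intro γ τ
      simp only [h, norm_mul, norm_pow, norm_zpow, hPδ, D, jc_delta_inv]
      have hd : ‖denom γ τ‖ ≠ 0 := norm_ne_zero_iff.mpr (denom_ne_zero γ τ)
      rw [mul_pow, mul_zpow, ← zpow_natCast, ← zpow_mul, ← zpow_mul]
      have : ‖denom γ τ‖ ^ (w * ↑X * ((12:ℕ):ℤ)) * ‖denom γ τ‖ ^ (12 * -(w * ↑X)) = 1 := by
        rw [← zpow_add₀ hd]
        convert zpow_zero _ using 2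
        push_cast; ring
      linear_combination (‖P τ‖ ^ 12 * ‖ModularForm.discriminant τ‖ ^ (-(w * ↑X))) * this
    ·
      obtain ⟨C, hC⟩ : ∃ C : ℝ, ∀ τ : ℍ, 1 ≤ τ.im →
          ‖P τ‖ ≤ C * Real.exp (-2 * Real.pi * n₀ * τ.im) := by
        obtain ⟨C₀, hC₀⟩ := hdec
        choose Cb hCb using fun y : Y => hbdd (rep y)
        refine ⟨C₀ * ∏ y ∈ Finset.univ.erase y₀, Cb y, fun τ hτ => ?_⟩
        simp only [P, norm_prod]
        rw [← Finset.mul_prod_erase _ _ (Finset.mem_univ y₀)]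
        have e1 : ‖f y₀ τ‖ = ‖F τ‖ := by
          have := hcos (rep y₀) 1 (hrep y₀) τ
          simpa [f] using this
        rw [e1]
        calc _ ≤ (C₀ * Real.exp (-2 * Real.pi * n₀ * τ.im)) * ∏ y ∈ Finset.univ.erase y₀, Cb y := by
              exact mul_le_mul (hC₀ τ hτ)
                (Finset.prod_le_prod (fun _ _ => norm_nonneg _) (fun y _ => hCb y τ hτ))
                (Finset.prod_nonneg fun _ _ => norm_nonneg _) ((norm_nonneg _).trans (hC₀ τ hτ))
          _ = _ := by ring
      have him : ∀ᶠ τ : ℍ in atImInfty, 1 ≤ τ.im := (atImInfty_mem _).mpr ⟨1, fun _ h => h⟩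
      have himT : Tendsto (fun τ : ℍ => τ.im) atImInfty atTop := tendsto_comap
      rcases le_or_gt 0 (w * (X : ℤ)) with hw | hw
      · obtain ⟨W, hWe⟩ := Int.eq_ofNat_of_zero_le hw
        obtain ⟨M, hM⟩ := ModularForm.exp_isBigO_discriminant.bound
        have hb : ∀ᶠ τ : ℍ in atImInfty, ‖h τ‖ ≤ (C ^ 12 * M ^ W) * Real.exp (-(2 * Real.pi) * τ.im) := by
          filter_upwards [him, hM] with τ h1 h2
          rw [Real.norm_of_nonneg (Real.exp_pos _).le] at h2
          simp only [h, norm_mul, norm_pow, norm_zpow]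
          rw [hWe, zpow_neg]
          rw [zpow_natCast]
          have hDp : 0 < ‖D τ‖ := norm_pos_iff.mpr (hD0 τ)
          have h3 : ‖P τ‖ ^ 12 ≤ (C * Real.exp (-2 * Real.pi * n₀ * τ.im)) ^ 12 :=
            pow_le_pow_left₀ (norm_nonneg _) (hC τ h1) 12
          have hMpos : 0 < M := by
            by_contra hneg
            have := Real.exp_pos (-2 * Real.pi * τ.im)
            have h5 : M * ‖ModularForm.discriminant τ‖ ≤ 0 :=
              mul_nonpos_of_nonpos_of_nonneg (not_lt.mp hneg) (norm_nonneg _)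
            linarith
          have h4 : (‖D τ‖ ^ W)⁻¹ ≤ (M * Real.exp (2 * Real.pi * τ.im)) ^ W := by
            rw [← inv_pow]
            apply pow_le_pow_left₀ (by positivity)
            rw [inv_le_iff_one_le_mul₀ hDp]
            have := mul_le_mul_of_nonneg_right h2 (Real.exp_pos (2 * Real.pi * τ.im)).le
            rw [← Real.exp_add] at this
            have e : -2 * Real.pi * τ.im + 2 * Real.pi * τ.im = 0 := by ring
            rw [e, Real.exp_zero] at this
            calc _ ≤ _ := this
              _ = _ := by ring
          calc _ ≤ (C * Real.exp (-2 * Real.pi * n₀ * τ.im)) ^ 12 *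
                (M * Real.exp (2 * Real.pi * τ.im)) ^ W :=
                mul_le_mul h3 h4 (by positivity) (le_trans (by positivity) h3)
            _ = (C ^ 12 * M ^ W) * Real.exp (2 * Real.pi * τ.im * (W - 12 * n₀)) := by
                rw [mul_pow, mul_pow, ← Real.exp_nat_mul, ← Real.exp_nat_mul, mul_mul_mul_comm,
                  ← Real.exp_add]
                congr 2
                push_cast; ring
            _ ≤ _ := by
                apply mul_le_mul_of_nonneg_left
                · apply Real.exp_le_exp.mpr
                  have hWn : (W : ℝ) + 1 ≤ 12 * n₀ := by
                    rw [hWe] at hW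
                    have : (W : ℤ) + 1 ≤ 12 * n₀ := hW
                    exact_mod_cast this
                  have hp : 0 < 2 * Real.pi * τ.im := by positivity
                  nlinarith
                · positivity
        apply squeeze_zero_norm' hb
        have : Tendsto (fun τ : ℍ => Real.exp (-(2 * Real.pi) * τ.im)) atImInfty (𝓝 0) := by
          apply Real.tendsto_exp_atBot.comp
          exact himT.const_mul_atTop_of_neg (by have := Real.pi_pos; linarith)
        simpa using this.const_mul (C ^ 12 * M ^ W)
      · obtain ⟨W, hWe⟩ := Int.eq_ofNat_of_zero_le (show 0 ≤ -(w * (X : ℤ)) by linarith)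
        have hW0 : W ≠ 0 := by
          rintro rfl
          rw [Nat.cast_zero] at hWe; omega
        have hb : ∀ᶠ τ : ℍ in atImInfty, ‖h τ‖ ≤ C ^ 12 * ‖D τ‖ ^ W := by
          filter_upwards [him] with τ h1
          simp only [h, norm_mul, norm_pow, norm_zpow]
          rw [hWe, zpow_natCast]
          apply mul_le_mul_of_nonneg_right _ (by positivity)
          apply pow_le_pow_left₀ (norm_nonneg _)
          have hCn : 0 ≤ C := by
            by_contra hneg
            have := Real.exp_pos (-2 * Real.pi * n₀ * τ.im)
            have h2 := hC τ h1
            have h3 := norm_nonneg (P τ)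
            nlinarith
          refine (hC τ h1).trans ?_
          apply mul_le_of_le_one_right hCn
          apply Real.exp_le_one_iff.mpr
          have : 0 ≤ Real.pi * n₀ * τ.im := by positivity
          linarith
        apply squeeze_zero_norm' hb
        have h0 : Tendsto D atImInfty (𝓝 0) := ModularForm.discriminant_isZeroAtImInfty
        have := ((h0.norm.pow W).const_mul (C ^ 12))
        simpa [hW0] using this
  have hP0 : ∀ τ, P τ = 0 := by
    intro τ
    have := hz τ
    simp only [h, mul_eq_zero] at this
    rcases this with h1 | h1
    · exact pow_eq_zero_iff (by norm_num) |>.mp h1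
    · exact absurd h1 (zpow_ne_zero _ (hD0 τ))
  obtain ⟨y, -, hy⟩ := jc_prod_zero Finset.univ f (fun i _ => hfd i) hP0
  intro τ
  have := hy ((rep y)⁻¹ • τ)
  simp only [f, ModularForm.SL_slash_apply, smul_inv_smul, mul_eq_zero] at this
  rcases this with h1 | h1
  · exact h1
  · exact absurd h1 (zpow_ne_zero _ (denom_ne_zero _ _))

end PartA

section PartB

/-- evaluation of a Laurent polynomial at `e(z)` -/
noncomputable def jcEv (p : LaurentPolynomial ℂ) (z : ℂ) : ℂ :=
  LaurentPolynomial.eval₂ (RingHom.id ℂ)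
    (Units.mk0 (Complex.exp (2 * Real.pi * Complex.I * z)) (Complex.exp_ne_zero _)) p

lemma jcEv_eq (p : LaurentPolynomial ℂ) (z : ℂ) :
    jcEv p z = ∑ n ∈ p.coeff.support, p.coeff n * Complex.exp (2 * Real.pi * Complex.I * (n * z)) := by
  have : jcEv p z = p.coeff.sum fun n a => a * Complex.exp (2 * Real.pi * Complex.I * (n * z)) := by
    induction p using LaurentPolynomial.induction_on' with
    | add p q hp hq =>
      rw [jcEv, map_add, ← jcEv, ← jcEv, hp, hq, AddMonoidAlgebra.coeff_add, Finsupp.sum_add_index']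
      · simp
      · intros; ring
    | C_mul_T n a =>
      rw [jcEv, LaurentPolynomial.eval₂_C_mul_T, ← LaurentPolynomial.single_eq_C_mul_T]
      rw [AddMonoidAlgebra.coeff_single, Finsupp.sum_single_index (by simp)]
      simp only [RingHom.id_apply, Units.val_zpow_eq_zpow_val, Units.val_mk0]
      rw [← Complex.exp_int_mul]
      congr 2; ring
  rw [this]; rfl

lemma jcEv_differentiable (p : LaurentPolynomial ℂ) : Differentiable ℂ (jcEv p) := by
  have : jcEv p = fun z => ∑ n ∈ p.coeff.support, p.coeff n * Complex.exp (2 * Real.pi * Complex.I * (n * z)) :=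
    funext (jcEv_eq p)
  rw [this]
  fun_prop

lemma jcEv_lin_order (z0 : ℂ) :
    analyticOrderAt (jcEv (Polynomial.toLaurent (Polynomial.X - Polynomial.C (Complex.exp (2 * Real.pi * Complex.I * z0))))) z0 = 1 := by
  have e : jcEv (Polynomial.toLaurent (Polynomial.X - Polynomial.C (Complex.exp (2 * Real.pi * Complex.I * z0)))) =
      fun z => Complex.exp (2 * Real.pi * Complex.I * z) - Complex.exp (2 * Real.pi * Complex.I * z0) := by
    funext z
    simp [jcEv]
  rw [e]
  have han : AnalyticAt ℂ (fun z => Complex.exp (2 * Real.pi * Complex.I * z) - Complex.exp (2 * Real.pi * Complex.I * z0)) z0 := by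
    fun_prop
  have h1 : analyticOrderAt (fun z => Complex.exp (2 * Real.pi * Complex.I * z) - Complex.exp (2 * Real.pi * Complex.I * z0)) z0 ≠ 0 := by
    rw [han.analyticOrderAt_ne_zero]; simp
  have hd : HasDerivAt (fun z => Complex.exp (2 * Real.pi * Complex.I * z) - Complex.exp (2 * Real.pi * Complex.I * z0))
      (Complex.exp (2 * Real.pi * Complex.I * z0) * (2 * Real.pi * Complex.I)) z0 := by
    have := ((hasDerivAt_id z0).const_mul (2 * Real.pi * Complex.I : ℂ)).cexp.sub_const
      (Complex.exp (2 * Real.pi * Complex.I * z0))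
    simpa using this
  have h2 : ¬ ((2 : ℕ) : ℕ∞) ≤ analyticOrderAt (fun z => Complex.exp (2 * Real.pi * Complex.I * z) - Complex.exp (2 * Real.pi * Complex.I * z0)) z0 := by
    rw [natCast_le_analyticOrderAt_iff_iteratedDeriv_eq_zero han]
    intro h
    have := h 1 (by norm_num)
    rw [iteratedDeriv_one, hd.deriv] at this
    simp [Complex.exp_ne_zero] at this
  apply le_antisymm
  · rw [not_le] at h2
    simpa using h2
  · exact Order.one_le_iff_ne_zero.mpr h1

lemma jc_dvd_iff (p : LaurentPolynomial ℂ) (z0 : ℂ) (V : ℕ) :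
    (Polynomial.toLaurent (Polynomial.X - Polynomial.C (Complex.exp (2 * Real.pi * Complex.I * z0)))) ^ V ∣ p ↔
      ∀ i < V, iteratedDeriv i (jcEv p) z0 = 0 := by
  have han : ∀ q, AnalyticAt ℂ (jcEv q) z0 := fun q => (jcEv_differentiable q).analyticAt z0
  rw [← natCast_le_analyticOrderAt_iff_iteratedDeriv_eq_zero (han p)]
  set ℓ := Polynomial.X - Polynomial.C (Complex.exp (2 * Real.pi * Complex.I * z0)) with hℓ
  have hmul : ∀ p q, jcEv (p * q) = jcEv p * jcEv q := by
    intro p q; funext z; simp [jcEv]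
  have hpow : ∀ p (n : ℕ), jcEv (p ^ n) = jcEv p ^ n := by
    intro p n; funext z; simp [jcEv]
  constructor
  · rintro ⟨q, rfl⟩
    rw [hmul, hpow, analyticOrderAt_mul ((han _).pow V) (han _), analyticOrderAt_pow (han _),
      jcEv_lin_order]
    simp
  · intro h
    by_cases hp0 : p = 0
    · rw [hp0]; exact dvd_zero _
    obtain ⟨n, P, hP⟩ := LaurentPolynomial.exists_T_pow p
    have hP0 : P ≠ 0 := by
      rintro rfl
      rw [map_zero] at hP
      exact hp0 ((LaurentPolynomial.isUnit_T (R := ℂ) n).mul_left_eq_zero.mp hP.symm)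
    obtain ⟨Q, hQ, hQ2⟩ := Polynomial.exists_eq_pow_rootMultiplicity_mul_and_not_dvd P hP0
      (Complex.exp (2 * Real.pi * Complex.I * z0))
    rw [← hℓ] at hQ hQ2
    set M := Polynomial.rootMultiplicity (Complex.exp (2 * Real.pi * Complex.I * z0)) P
    have hp : p = Polynomial.toLaurent ℓ ^ M * (Polynomial.toLaurent Q * LaurentPolynomial.T (-n)) := by
      have : p = Polynomial.toLaurent P * LaurentPolynomial.T (-n) := by
        rw [hP, LaurentPolynomial.mul_T_assoc]; simp
      rw [this, hQ, map_mul, map_pow, mul_assoc]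
    have hne : analyticOrderAt (jcEv (Polynomial.toLaurent Q * LaurentPolynomial.T (-n))) z0 = 0 := by
      rw [(han _).analyticOrderAt_eq_zero, hmul]
      simp only [Pi.mul_apply, jcEv, LaurentPolynomial.eval₂_toLaurent, LaurentPolynomial.eval₂_T]
      apply mul_ne_zero
      · intro h0
        apply hQ2
        rw [Polynomial.dvd_iff_isRoot]
        simpa [Polynomial.eval₂_id] using h0
      · exact Units.ne_zero _
    rw [hp, hmul, hpow, analyticOrderAt_mul ((han _).pow M) (han _), analyticOrderAt_pow (han _),
      jcEv_lin_order, hne] at h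
    have hVM : V ≤ M := by simpa using h
    rw [hp]
    exact (pow_dvd_pow _ hVM).mul_right _

lemma jc_toLaurent_coprime {p q : Polynomial ℂ} (h : IsCoprime p q) :
    IsCoprime (Polynomial.toLaurent p) (Polynomial.toLaurent q) := h.map _

lemma jc_cyclo_dvd (r : ℕ) (hr : 1 ≤ r) (V : ℕ) (p : LaurentPolynomial ℂ) 
    (h : ∀ a : ℕ, a.Coprime r → (Polynomial.toLaurent (Polynomial.X -
      Polynomial.C (Complex.exp (2 * Real.pi * Complex.I * ((a : ℂ) / r))))) ^ V ∣ p) :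
    ((Polynomial.cyclotomic r ℂ).toLaurent) ^ V ∣ p := by
  have hr0 : r ≠ 0 := by omega
  rw [Polynomial.cyclotomic_eq_prod_X_sub_primitiveRoots (Complex.isPrimitiveRoot_exp r hr0),
    map_prod, ← Finset.prod_pow]
  apply Finset.prod_dvd_of_coprime
  · intro a _ b _ hab
    apply IsCoprime.pow
    apply jc_toLaurent_coprime
    exact Polynomial.isCoprime_X_sub_C_of_isUnit_sub (sub_ne_zero.mpr hab).isUnit
  · intro μ hμ
    have hμ' := isPrimitiveRoot_of_mem_primitiveRoots hμ
    obtain ⟨i, hi, hco, he⟩ := (Complex.isPrimitiveRoot_iff μ r hr0).mp hμ'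
    rw [← he]
    exact h i hco

lemma jc_prod_dvd (ν : ℕ → ℕ) (Nb : ℕ) (p : LaurentPolynomial ℂ)
    (h : ∀ r ∈ Finset.Icc 1 Nb, ((Polynomial.cyclotomic r ℂ).toLaurent) ^ ν r ∣ p) :
    (∏ r ∈ Finset.Icc 1 Nb, ((Polynomial.cyclotomic r ℂ).toLaurent) ^ ν r) ∣ p := by
  apply Finset.prod_dvd_of_coprime _ h
  intro a ha b hb hab
  apply IsCoprime.pow
  apply jc_toLaurent_coprime
  have := (Polynomial.cyclotomic.isCoprime_rat hab).map (Polynomial.mapRingHom (algebraMap ℚ ℂ))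
  simpa using this

lemma jc_dvd_cyclo (r : ℕ) (a : ℕ) (hr : 1 ≤ r) (ha : a.Coprime r) (V : ℕ) (p : LaurentPolynomial ℂ)
    (h : ((Polynomial.cyclotomic r ℂ).toLaurent) ^ V ∣ p) :
    (Polynomial.toLaurent (Polynomial.X -
      Polynomial.C (Complex.exp (2 * Real.pi * Complex.I * ((a : ℂ) / r))))) ^ V ∣ p := by
  refine (pow_dvd_pow_of_dvd ?_ V).trans h
  apply map_dvd
  rw [Polynomial.dvd_iff_isRoot]
  exact (Complex.isPrimitiveRoot_exp_of_coprime a r (by omega) ha).isRoot_cyclotomic (by omega)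

end PartB

section PartC
open Filter Topology

/-- the exponential `q^n ζ^ρ` -/
noncomputable def jcE (p : ℤ × ℤ) (τ z : ℂ) : ℂ :=
  Complex.exp (2 * Real.pi * Complex.I * ((p.1 : ℂ) * τ + (p.2 : ℂ) * z))

/-- absolute convergence of the Fourier series -/
def jcS (c : ℤ × ℤ → ℂ) : Prop := ∀ τ z : ℂ, 0 < τ.im → Summable (fun p => ‖c p * jcE p τ z‖)

/-- the Fourier series -/
noncomputable def jcF (c : ℤ × ℤ → ℂ) (τ z : ℂ) : ℂ := ∑' p, c p * jcE p τ z

lemma jcE_norm (p : ℤ × ℤ) (τ z : ℂ) :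
    ‖jcE p τ z‖ = Real.exp (-(2 * Real.pi) * (p.1 * τ.im + p.2 * z.im)) := by
  rw [jcE, Complex.norm_exp]
  congr 1
  simp

lemma jc_abs_le_exp (x : ℝ) : |x| ≤ Real.exp x + Real.exp (-x) := by
  have h1 := Real.add_one_le_exp x
  have h2 := Real.add_one_le_exp (-x)
  have h3 := Real.exp_pos x
  have h4 := Real.exp_pos (-x)
  rw [abs_le]; constructor <;> linarith

lemma jc_exp_between (a x : ℝ) (hx : |x| ≤ 1) : Real.exp (a * x) ≤ Real.exp a + Real.exp (-a) := by
  have h3 := Real.exp_pos a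
  have h4 := Real.exp_pos (-a)
  rw [abs_le] at hx
  rcases le_total 0 a with h | h
  · have : Real.exp (a * x) ≤ Real.exp a := Real.exp_le_exp.mpr (by nlinarith)
    linarith
  · have : Real.exp (a * x) ≤ Real.exp (-a) := Real.exp_le_exp.mpr (by nlinarith)
    linarith

lemma jcE_shift (p : ℤ × ℤ) (τ z w : ℂ) (h : |w.im - z.im| ≤ 1) :
    ‖jcE p τ w‖ ≤ ‖jcE p τ (z + Complex.I)‖ + ‖jcE p τ (z - Complex.I)‖ := by
  simp only [jcE_norm]
  have := jc_exp_between (-(2 * Real.pi) * p.2) (w.im - z.im) h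
  have h2 := mul_le_mul_of_nonneg_left this (Real.exp_pos (-(2 * Real.pi) * (p.1 * τ.im + p.2 * z.im))).le
  rw [mul_add (Real.exp _) (Real.exp _) (Real.exp _), ← Real.exp_add, ← Real.exp_add, ← Real.exp_add] at h2
  have e1 : -(2 * Real.pi) * (p.1 * τ.im + p.2 * w.im) =
      -(2 * Real.pi) * (p.1 * τ.im + p.2 * z.im) + -(2 * Real.pi) * p.2 * (w.im - z.im) := by ring
  have e2 : -(2 * Real.pi) * (p.1 * τ.im + p.2 * (z + Complex.I).im) =
      -(2 * Real.pi) * (p.1 * τ.im + p.2 * z.im) + -(2 * Real.pi) * p.2 := by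
    rw [Complex.add_im, Complex.I_im]; ring
  have e3 : -(2 * Real.pi) * (p.1 * τ.im + p.2 * (z - Complex.I).im) =
      -(2 * Real.pi) * (p.1 * τ.im + p.2 * z.im) + -(-(2 * Real.pi) * p.2) := by
    rw [Complex.sub_im, Complex.I_im]; ring
  rw [e1, e2, e3]
  exact h2

lemma jcS_bound {c : ℤ × ℤ → ℂ} (hc : jcS c) (τ z : ℂ) (hτ : 0 < τ.im) :
    Summable (fun p => ‖c p * jcE p τ (z + Complex.I)‖ + ‖c p * jcE p τ (z - Complex.I)‖) :=
  (hc τ _ hτ).add (hc τ _ hτ)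

lemma jcS_mul {c : ℤ × ℤ → ℂ} (hc : jcS c) :
    jcS (fun p => (2 * Real.pi * Complex.I * p.2) * c p) := by
  intro τ z hτ
  refine Summable.of_nonneg_of_le (fun _ => norm_nonneg _) (fun p => ?_) (jcS_bound hc τ z hτ)
  have h1 : ‖(2 * Real.pi * Complex.I * p.2 : ℂ)‖ = |2 * Real.pi * p.2| := by
    rw [abs_mul]
    simp [abs_of_pos Real.pi_pos]
  rw [norm_mul, norm_mul, h1, norm_mul, norm_mul]
  have h2 : |2 * Real.pi * p.2| * ‖jcE p τ z‖ ≤ ‖jcE p τ (z + Complex.I)‖ + ‖jcE p τ (z - Complex.I)‖ := by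
    simp only [jcE_norm]
    have h2 := mul_le_mul_of_nonneg_right (jc_abs_le_exp (2 * Real.pi * p.2))
      (Real.exp_pos (-(2 * Real.pi) * (p.1 * τ.im + p.2 * z.im))).le
    rw [add_mul, ← Real.exp_add, ← Real.exp_add] at h2
    have e2 : -(2 * Real.pi) * (p.1 * τ.im + p.2 * (z + Complex.I).im) =
        -(2 * Real.pi * p.2) + -(2 * Real.pi) * (p.1 * τ.im + p.2 * z.im) := by
      rw [Complex.add_im, Complex.I_im]; ring
    have e3 : -(2 * Real.pi) * (p.1 * τ.im + p.2 * (z - Complex.I).im) =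
        2 * Real.pi * p.2 + -(2 * Real.pi) * (p.1 * τ.im + p.2 * z.im) := by
      rw [Complex.sub_im, Complex.I_im]; ring
    rw [e2, e3]
    linarith
  nlinarith [norm_nonneg (c p)]

lemma jcS_pow {c : ℤ × ℤ → ℂ} (hc : jcS c) (j : ℕ) :
    jcS (fun p => (2 * Real.pi * Complex.I * p.2) ^ j * c p) := by
  induction j with
  | zero => simpa using hc
  | succ j ih =>
    have := jcS_mul ih
    convert this using 2 with p
    rw [pow_succ]; ring

lemma jc_strip_open (y : ℝ) : IsOpen {w : ℂ | |w.im - y| < 1} :=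
  isOpen_lt ((Complex.continuous_im.sub continuous_const).abs) continuous_const

lemma jcF_differentiable {c : ℤ × ℤ → ℂ} (hc : jcS c) (τ : ℂ) (hτ : 0 < τ.im) :
    Differentiable ℂ (jcF c τ) := by
  intro z
  have h := Complex.differentiableOn_tsum_of_summable_norm (jcS_bound hc τ z hτ)
    (F := fun p w => c p * jcE p τ w) (U := {w : ℂ | |w.im - z.im| < 1})
    (fun p => by unfold jcE; fun_prop) (jc_strip_open _)
    (fun p w hw => by
      rw [norm_mul, norm_mul, norm_mul, ← mul_add]
      exact mul_le_mul_of_nonneg_left (jcE_shift p τ z w (le_of_lt hw)) (norm_nonneg _))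
  exact h.differentiableAt ((jc_strip_open _).mem_nhds (by simp))

lemma jcF_deriv {c : ℤ × ℤ → ℂ} (hc : jcS c) (τ : ℂ) (hτ : 0 < τ.im) :
    deriv (jcF c τ) = jcF (fun p => (2 * Real.pi * Complex.I * p.2) * c p) τ := by
  funext z
  have h := Complex.hasSum_deriv_of_summable_norm (jcS_bound hc τ z hτ)
    (F := fun p w => c p * jcE p τ w) (U := {w : ℂ | |w.im - z.im| < 1}) (z := z)
    (fun p => by unfold jcE; fun_prop) (jc_strip_open _)
    (fun p w hw => by
      rw [norm_mul, norm_mul, norm_mul, ← mul_add]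
      exact mul_le_mul_of_nonneg_left (jcE_shift p τ z w (le_of_lt hw)) (norm_nonneg _))
    (by simp)
  have h2 := h.tsum_eq
  rw [show deriv (jcF c τ) z = _ from h2.symm, jcF]
  congr 1
  funext p
  have hd : HasDerivAt (fun w => c p * jcE p τ w) (c p * (jcE p τ z * (2 * Real.pi * Complex.I * p.2))) z := by
    apply HasDerivAt.const_mul
    unfold jcE
    apply HasDerivAt.cexp
    have := (((hasDerivAt_id z).const_mul (p.2 : ℂ)).const_add ((p.1 : ℂ) * τ)).const_mul
      (2 * Real.pi * Complex.I : ℂ)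
    simpa using this
  rw [hd.deriv]; ring

lemma jcF_iteratedDeriv {c : ℤ × ℤ → ℂ} (hc : jcS c) (τ : ℂ) (hτ : 0 < τ.im) (j : ℕ) :
    iteratedDeriv j (jcF c τ) = jcF (fun p => (2 * Real.pi * Complex.I * p.2) ^ j * c p) τ := by
  induction j with
  | zero => simp
  | succ j ih =>
    rw [iteratedDeriv_succ, ih, jcF_deriv (jcS_pow hc j) τ hτ]
    congr 1
    funext p
    rw [pow_succ]; ring

lemma jcF_differentiableOn {c : ℤ × ℤ → ℂ} (hc : jcS c) (hneg : ∀ p : ℤ × ℤ, p.1 < 0 → c p = 0)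
    (z : ℂ) : DifferentiableOn ℂ (fun τ => jcF c τ z) {τ : ℂ | 0 < τ.im} := by
  intro τ₀ hτ₀
  simp only [Set.mem_ofPred_eq] at hτ₀
  have hop : IsOpen {τ : ℂ | τ₀.im / 2 < τ.im} := isOpen_lt continuous_const Complex.continuous_im
  have h := Complex.differentiableOn_tsum_of_summable_norm
    (hc ((τ₀.im / 2 : ℝ) * Complex.I) z (by simp; linarith))
    (F := fun p τ => c p * jcE p τ z) (U := {τ : ℂ | τ₀.im / 2 < τ.im})
    (fun p => by unfold jcE; fun_prop) hop
    (fun p w hw => by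
      rw [norm_mul, norm_mul]
      rcases lt_or_ge p.1 0 with hp | hp
      · simp [hneg p hp]
      apply mul_le_mul_of_nonneg_left _ (norm_nonneg _)
      rw [jcE_norm, jcE_norm]
      apply Real.exp_le_exp.mpr
      have hw' : τ₀.im / 2 < w.im := hw
      have e : (((τ₀.im / 2 : ℝ) : ℂ) * Complex.I).im = τ₀.im / 2 := by simp
      rw [e]
      have : (p.1 : ℝ) * (τ₀.im / 2) ≤ p.1 * w.im :=
        mul_le_mul_of_nonneg_left hw'.le (by exact_mod_cast hp)
      nlinarith [Real.pi_pos])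
  exact (h.differentiableAt (hop.mem_nhds (by simp only [Set.mem_ofPred_eq]; linarith))).differentiableWithinAt

lemma jc_qseries {c : ℤ × ℤ → ℂ} (hc : jcS c) (z : ℂ) (A : ℤ → ℂ)
    (hA : ∀ n, HasSum (fun ρ : ℤ => c (n, ρ) * Complex.exp (2 * Real.pi * Complex.I * (ρ * z))) (A n)) :
    (Summable fun n : ℤ => ‖A n‖ * Real.exp (-(2 * Real.pi) * n)) ∧
    ∀ τ : ℂ, 0 < τ.im → HasSum (fun n : ℤ => A n * Complex.exp (2 * Real.pi * Complex.I * (n * τ))) (jcF c τ z) := by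
  have hE : ∀ (n ρ : ℤ) (τ : ℂ), jcE (n, ρ) τ z =
      Complex.exp (2 * Real.pi * Complex.I * (ρ * z)) * Complex.exp (2 * Real.pi * Complex.I * (n * τ)) := by
    intro n ρ τ
    rw [jcE, ← Complex.exp_add]; congr 1; ring
  have hfib : ∀ (τ : ℂ) (n : ℤ), HasSum (fun ρ : ℤ => c (n, ρ) * jcE (n, ρ) τ z)
      (A n * Complex.exp (2 * Real.pi * Complex.I * (n * τ))) := by
    intro τ n
    have h := (hA n).mul_right (Complex.exp (2 * Real.pi * Complex.I * (n * τ)))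
    have e : (fun ρ : ℤ => c (n, ρ) * jcE (n, ρ) τ z) = fun ρ : ℤ =>
        c (n, ρ) * Complex.exp (2 * Real.pi * Complex.I * (ρ * z)) *
          Complex.exp (2 * Real.pi * Complex.I * (n * τ)) := by
      funext ρ; rw [hE]; ring
    rw [e]; exact h
  constructor
  · have hs := hc Complex.I z (by simp)
    refine Summable.of_nonneg_of_le (fun _ => by positivity) (fun n => ?_) hs.prod
    have h1 : ‖A n * Complex.exp (2 * Real.pi * Complex.I * (n * Complex.I))‖ =
        ‖A n‖ * Real.exp (-(2 * Real.pi) * n) := by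
      rw [norm_mul, Complex.norm_exp]
      congr 2
      simp
    rw [← h1, ← (hfib Complex.I n).tsum_eq]
    exact norm_tsum_le_tsum_norm (hs.prod_factor n)
  · intro τ hτ
    exact ((hc τ z hτ).of_norm.hasSum).prod_fiberwise (fun n => hfib τ n)

lemma jc_decay (A : ℤ → ℂ) (hs : Summable fun n : ℤ => ‖A n‖ * Real.exp (-(2 * Real.pi) * n))
    (n₀ : ℤ) (h0 : ∀ n < n₀, A n = 0) : ∃ C : ℝ, ∀ (τ : ℂ) (s : ℂ), 1 ≤ τ.im →
      HasSum (fun n : ℤ => A n * Complex.exp (2 * Real.pi * Complex.I * (n * τ))) s →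
      ‖s‖ ≤ C * Real.exp (-2 * Real.pi * n₀ * τ.im) := by
  refine ⟨(∑' n, ‖A n‖ * Real.exp (-(2 * Real.pi) * n)) * Real.exp (2 * Real.pi * n₀), fun τ s hτ hsum => ?_⟩
  have hterm : ∀ n, ‖A n * Complex.exp (2 * Real.pi * Complex.I * (n * τ))‖ ≤
      ‖A n‖ * Real.exp (-(2 * Real.pi) * n) * (Real.exp (2 * Real.pi * n₀) * Real.exp (-2 * Real.pi * n₀ * τ.im)) := by
    intro n
    rcases lt_or_ge n n₀ with h | h
    · simp [h0 n h]
    · rw [norm_mul, Complex.norm_exp, mul_assoc ‖A n‖]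
      apply mul_le_mul_of_nonneg_left _ (norm_nonneg _)
      rw [← Real.exp_add, ← Real.exp_add]
      apply Real.exp_le_exp.mpr
      have h' : (n₀ : ℝ) ≤ n := by exact_mod_cast h
      have e : (2 * Real.pi * Complex.I * (n * τ) : ℂ).re = -(2 * Real.pi) * (n * τ.im) := by
        simp
      rw [e]
      have : 0 ≤ Real.pi * ((n - n₀) * (τ.im - 1)) :=
        mul_nonneg Real.pi_pos.le (mul_nonneg (by linarith) (by linarith))
      nlinarith
  have hb := tsum_of_norm_bounded (hs.mul_right _).hasSum hterm
  rw [hsum.tsum_eq, tsum_mul_right, ← mul_assoc (∑' _, _)] at hb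
  exact hb

lemma jc_unique (A : ℤ → ℂ) (hs : Summable fun n : ℤ => ‖A n‖ * Real.exp (-(2 * Real.pi) * n))
    (hneg : ∀ n < 0, A n = 0)
    (h : ∀ τ : ℂ, 0 < τ.im → HasSum (fun n : ℤ => A n * Complex.exp (2 * Real.pi * Complex.I * (n * τ))) 0) :
    ∀ n, A n = 0 := by
  have key : ∀ k : ℕ, A k = 0 := by
    intro k
    induction k using Nat.strong_induction_on with
    | _ k ih =>
      have hlow : ∀ n : ℤ, n < k → A n = 0 := by
        intro n hn
        rcases lt_or_ge n 0 with h1 | h1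
        · exact hneg n h1
        · obtain ⟨l, rfl⟩ := Int.eq_ofNat_of_zero_le h1
          exact ih l (by exact_mod_cast hn)
      let A' : ℤ → ℂ := Function.update A k 0
      have hA' : ∀ n, ‖A' n‖ ≤ ‖A n‖ := by
        intro n
        by_cases hn : n = k
        · subst hn; simp [A']
        · simp [A', hn]
      obtain ⟨C, hC⟩ := jc_decay A' (Summable.of_nonneg_of_le (fun _ => by positivity)
        (fun n => mul_le_mul_of_nonneg_right (hA' n) (Real.exp_pos _).le) hs) (k + 1) (by
          intro n hn
          by_cases hn' : n = k
          · subst hn'; simp [A']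
          · simp only [A', Function.update_of_ne hn']
            exact hlow n (by omega))
      have hb : ∀ y : ℝ, 1 ≤ y → ‖A k‖ ≤ C * Real.exp (-(2 * Real.pi) * y) := by
        intro y hy
        have hτ : 0 < ((y : ℂ) * Complex.I).im := by simp; linarith
        have h1 := (h ((y : ℂ) * Complex.I) hτ).update (k : ℤ) 0
        have h2 := hC ((y : ℂ) * Complex.I) (0 - A k * Complex.exp (2 * Real.pi * Complex.I * ((k : ℤ) * ((y : ℂ) * Complex.I))) + 0)
          (by simpa using hy) (by
            have e : (fun n : ℤ => A' n * Complex.exp (2 * Real.pi * Complex.I * (n * ((y : ℂ) * Complex.I)))) =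
                Function.update (fun n : ℤ => A n * Complex.exp (2 * Real.pi * Complex.I * (n * ((y : ℂ) * Complex.I)))) (k : ℤ) 0 := by
              funext n
              by_cases hn : n = k
              · subst hn; simp [A']
              · simp [A', hn]
            rw [e]
            have e2 : (0 - A k * Complex.exp (2 * Real.pi * Complex.I * ((k : ℤ) * ((y : ℂ) * Complex.I))) + 0 : ℂ) =
              0 - A k * Complex.exp (2 * Real.pi * Complex.I * ((k : ℤ) * ((y : ℂ) * Complex.I))) + 0 := rfl
            simpa using h1)
        rw [add_zero, zero_sub, norm_neg, norm_mul, Complex.norm_exp] at h2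
        have e : (2 * Real.pi * Complex.I * ((k : ℤ) * ((y : ℂ) * Complex.I)) : ℂ).re = -(2 * Real.pi) * (k * y) := by
          simp
        have e2 : ((y : ℂ) * Complex.I).im = y := by simp
        rw [e, e2] at h2
        have h3 := mul_le_mul_of_nonneg_right h2 (Real.exp_pos (2 * Real.pi * (k * y))).le
        rw [mul_assoc ‖A k‖, mul_assoc C, ← Real.exp_add, ← Real.exp_add] at h3
        have e3 : -(2 * Real.pi) * (k * y) + 2 * Real.pi * (k * y) = 0 := by ring
        rw [e3, Real.exp_zero, mul_one] at h3
        have e4 : -2 * Real.pi * (((k : ℤ) + 1 : ℤ) : ℝ) * y + 2 * Real.pi * (k * y) = -(2 * Real.pi) * y := by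
          push_cast; ring
        rw [e4] at h3
        exact h3
      have hlim : Tendsto (fun y : ℝ => C * Real.exp (-(2 * Real.pi) * y)) atTop (𝓝 0) := by
        have : Tendsto (fun y : ℝ => Real.exp (-(2 * Real.pi) * y)) atTop (𝓝 0) :=
          Real.tendsto_exp_atBot.comp
            (tendsto_id.const_mul_atTop_of_neg (by have := Real.pi_pos; linarith))
        simpa using this.const_mul C
      have : ‖A k‖ ≤ 0 := ge_of_tendsto hlim (by
        filter_upwards [eventually_ge_atTop 1] with y hy using hb y hy)
      exact norm_le_zero_iff.mp this
  intro n
  rcases lt_or_ge n 0 with h1 | h1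
  · exact hneg n h1
  · obtain ⟨l, rfl⟩ := Int.eq_ofNat_of_zero_le h1
    exact key l

/-- the translate of a Jacobi form by `lam τ + mu` -/
noncomputable def jcG (m : ℤ) (g : ℂ → ℂ → ℂ) (lam mu : ℝ) (τ z : ℂ) : ℂ :=
  Complex.exp (2 * Real.pi * Complex.I * (m * ((lam : ℂ) ^ 2 * τ + 2 * lam * z))) *
    g τ (z + lam * τ + mu)

lemma jcG_bound (m : ℤ) (hm : 0 < m) {c : ℤ × ℤ → ℂ} (hc : jcS c)
    (hcusp : ∀ n ρ : ℤ, 4 * n * m - ρ ^ 2 ≤ 0 → c (n, ρ) = 0) (lam mu : ℝ) :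
    ∃ C : ℝ, ∀ τ z : ℂ, 1 ≤ τ.im → ‖z‖ ≤ 1 → ‖jcG m (jcF c) lam mu τ z‖ ≤ C := by
  let K1 := Real.exp (-(2 * Real.pi) * (m * lam ^ 2 - 2 * m * lam))
  let K2 := Real.exp (-(2 * Real.pi) * (m * lam ^ 2 + 2 * m * lam))
  have hu : Summable fun p => K1 * ‖c p * jcE p Complex.I ((lam - 1 : ℝ) * Complex.I)‖ +
      K2 * ‖c p * jcE p Complex.I ((lam + 1 : ℝ) * Complex.I)‖ :=
    ((hc _ _ (by simp)).mul_left _).add ((hc _ _ (by simp)).mul_left _)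
  refine ⟨∑' p, (K1 * ‖c p * jcE p Complex.I ((lam - 1 : ℝ) * Complex.I)‖ +
      K2 * ‖c p * jcE p Complex.I ((lam + 1 : ℝ) * Complex.I)‖), fun τ z hτ hz => ?_⟩
  · rw [jcG, jcF, ← tsum_mul_left]
    refine tsum_of_norm_bounded hu.hasSum ?_
    rintro ⟨n, ρ⟩
    by_cases hcz : 4 * n * m - ρ ^ 2 ≤ 0
    · simp [hcusp n ρ hcz]
    rw [norm_mul, norm_mul, norm_mul, norm_mul, Complex.norm_exp]
    simp only [jcE_norm]
    have e1 : (2 * Real.pi * Complex.I * (m * ((lam : ℂ) ^ 2 * τ + 2 * lam * z)) : ℂ).re =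
        -(2 * Real.pi) * (m * (lam ^ 2 * τ.im + 2 * lam * z.im)) := by
      have h1 : ((lam : ℂ) ^ 2 * τ + 2 * lam * z).im = lam ^ 2 * τ.im + 2 * lam * z.im := by
        have : ((lam : ℂ) ^ 2 * τ + 2 * lam * z) = ((lam ^ 2 : ℝ) : ℂ) * τ + ((2 * lam : ℝ) : ℂ) * z := by
          push_cast; ring
        rw [this, Complex.add_im, Complex.im_ofReal_mul, Complex.im_ofReal_mul]
      have h2 : (2 * Real.pi * Complex.I * (m * ((lam : ℂ) ^ 2 * τ + 2 * lam * z)) : ℂ) =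
        ((2 * Real.pi * m : ℝ) : ℂ) * (Complex.I * ((lam : ℂ) ^ 2 * τ + 2 * lam * z)) := by
        push_cast; ring
      rw [h2, Complex.re_ofReal_mul, Complex.I_mul_re, h1]; ring
    have e2 : (z + lam * τ + mu).im = z.im + lam * τ.im := by simp
    have e3 : (((lam - 1 : ℝ) : ℂ) * Complex.I).im = lam - 1 := by simp
    have e4 : (((lam + 1 : ℝ) : ℂ) * Complex.I).im = lam + 1 := by simp
    rw [e1, e2, e3, e4, Complex.I_im]
    have hpos : 0 ≤ (n : ℝ) + ρ * lam + m * lam ^ 2 := by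
      have hm' : (0 : ℝ) < m := by exact_mod_cast hm
      have h4 : (0 : ℝ) ≤ 4 * n * m - ρ ^ 2 := by
        have : 0 ≤ 4 * n * m - ρ ^ 2 := by omega
        exact_mod_cast this
      by_contra hneg
      push Not at hneg
      have := mul_neg_of_pos_of_neg hm' hneg
      nlinarith [sq_nonneg ((ρ : ℝ) + 2 * m * lam)]
    have hzim : |z.im| ≤ 1 := (Complex.abs_im_le_norm z).trans hz
    have hb := jc_exp_between (-(2 * Real.pi) * (ρ + 2 * m * lam)) z.im hzim
    have hb2 := mul_le_mul_of_nonneg_left hb (Real.exp_pos (-(2 * Real.pi) * (n + ρ * lam + m * lam ^ 2))).le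
    have hfin : Real.exp (-(2 * Real.pi) * (m * (lam ^ 2 * τ.im + 2 * lam * z.im))) *
        Real.exp (-(2 * Real.pi) * (n * τ.im + ρ * (z.im + lam * τ.im))) ≤
        K1 * Real.exp (-(2 * Real.pi) * (n * 1 + ρ * (lam - 1))) +
        K2 * Real.exp (-(2 * Real.pi) * (n * 1 + ρ * (lam + 1))) := by
      simp only [K1, K2]
      rw [mul_add (Real.exp _) (Real.exp _) (Real.exp _)] at hb2
      simp only [← Real.exp_add] at hb2 ⊢
      calc _ ≤ Real.exp (-(2 * Real.pi) * (n + ρ * lam + m * lam ^ 2) + -(2 * Real.pi) * (ρ + 2 * m * lam) * z.im) := by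
            apply Real.exp_le_exp.mpr
            have : 0 ≤ Real.pi * (((n : ℝ) + ρ * lam + m * lam ^ 2) * (τ.im - 1)) :=
              mul_nonneg Real.pi_pos.le (mul_nonneg hpos (by linarith))
            nlinarith
        _ ≤ _ := hb2
        _ = _ := by
            rw [add_comm (Real.exp _)]
            congr 2 <;> ring
    have := mul_le_mul_of_nonneg_left hfin (norm_nonneg (c (n, ρ)))
    calc _ = _ := by ring
      _ ≤ _ := this
      _ = _ := by ring
end PartC

section PartD
open UpperHalfPlane Filter Topology
open scoped MatrixGroups Manifold ModularForm

lemma jc_leib (u f : ℂ → ℂ) (hu : Differentiable ℂ u) (hf : Differentiable ℂ f) (j : ℕ)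
    (h : ∀ i < j, iteratedDeriv i f 0 = 0) :
    iteratedDeriv j (fun z => u z * f z) 0 = u 0 * iteratedDeriv j f 0 := by
  rw [iteratedDeriv_fun_mul hu.contDiff.contDiffAt hf.contDiff.contDiffAt]
  rw [Finset.sum_eq_single 0]
  · simp
  · intro i hi hi0
    rw [h (j - i) (by rw [Finset.mem_range] at hi; omega)]
    simp
  · simp

lemma jc_phase (x : ℝ) : ‖Complex.exp (2 * Real.pi * Complex.I * (x : ℂ))‖ = 1 := by
  rw [Complex.norm_exp]; simp

lemma jcG_shift (m : ℤ) (g : ℂ → ℂ → ℂ)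
    (transf₂ : ∀ lam mu : ℤ, ∀ τ z : ℂ, 0 < τ.im →
      g τ (z + (lam : ℂ) * τ + (mu : ℂ)) =
        Complex.exp (2 * Real.pi * Complex.I *
            (-(m : ℂ) * (lam : ℂ) ^ 2 * τ - 2 * (m : ℂ) * (lam : ℂ) * z)) * g τ z)
    (lam mu : ℝ) (l u : ℤ) (τ z : ℂ) (hτ : 0 < τ.im) :
    jcG m g (lam + l) (mu + u) τ z =
      Complex.exp (2 * Real.pi * Complex.I * ((-2 * m * l * mu : ℝ) : ℂ)) * jcG m g lam mu τ z := by
  have h := transf₂ l u τ (z + lam * τ + mu) hτ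
  have e : z + lam * τ + mu + l * τ + u = z + ((lam + l : ℝ) : ℂ) * τ + ((mu + u : ℝ) : ℂ) := by
    push_cast; ring
  rw [e] at h
  rw [jcG, h, jcG, ← mul_assoc (Complex.exp _) (Complex.exp _), ← mul_assoc (Complex.exp _) (Complex.exp _),
    ← Complex.exp_add, ← Complex.exp_add]
  congr 2
  push_cast; ring

lemma jcG_transf (k m : ℤ) (g : ℂ → ℂ → ℂ) (a b c d : ℤ) (τ : ℂ) (hJ : (c : ℂ) * τ + d ≠ 0)
    (h1 : ∀ z : ℂ, g ((a * τ + b) / (c * τ + d)) (z / (c * τ + d)) =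
      ((c : ℂ) * τ + d) ^ k * Complex.exp (2 * Real.pi * Complex.I * (m : ℂ) * c * z ^ 2 / (c * τ + d)) * g τ z)
    (mu : ℝ) (z : ℂ) :
    jcG m g (mu * c) (mu * d) τ z = (((c : ℂ) * τ + d) ^ k)⁻¹ *
      Complex.exp (2 * Real.pi * Complex.I * ((-(m * mu ^ 2 * c * d) : ℝ) : ℂ)) *
      (Complex.exp (- (2 * Real.pi * Complex.I * m * c * z ^ 2 / (c * τ + d))) *
        g ((a * τ + b) / (c * τ + d)) ((c * τ + d)⁻¹ * z + mu)) := by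
  have h := h1 (z + mu * (c * τ + d))
  have e : (z + mu * (c * τ + d)) / (c * τ + d) = (c * τ + d)⁻¹ * z + mu := by
    field_simp
  rw [e] at h
  rw [h, jcG]
  have e2 : z + mu * (c * τ + d) = z + ((mu * c : ℝ) : ℂ) * τ + ((mu * d : ℝ) : ℂ) := by push_cast; ring
  rw [← e2]
  have hk : ((c : ℂ) * τ + d) ^ k ≠ 0 := zpow_ne_zero _ hJ
  have e3 : Complex.exp (2 * Real.pi * Complex.I * (m * (((mu * c : ℝ) : ℂ) ^ 2 * τ + 2 * ((mu * c : ℝ) : ℂ) * z))) =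
    Complex.exp (2 * Real.pi * Complex.I * ((-(m * mu ^ 2 * c * d) : ℝ) : ℂ)) *
      Complex.exp (- (2 * Real.pi * Complex.I * m * c * z ^ 2 / (c * τ + d))) *
      Complex.exp (2 * Real.pi * Complex.I * (m : ℂ) * c * (z + mu * (c * τ + d)) ^ 2 / (c * τ + d)) := by
    rw [← Complex.exp_add, ← Complex.exp_add]
    congr 1
    push_cast
    field_simp
    ring
  rw [e3]
  field_simp

/-- norm identity for the leading Taylor coefficient -/
lemma jc_slash_norm (k m : ℤ) (g : ℂ → ℂ → ℂ) (γ : SL(2, ℤ)) (τ : ℍ)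
    (hg : ∀ τ : ℂ, 0 < τ.im → Differentiable ℂ (g τ))
    (h1 : ∀ z : ℂ, g (((γ 0 0 : ℂ) * τ + (γ 0 1 : ℂ)) / ((γ 1 0 : ℂ) * τ + (γ 1 1 : ℂ))) (z / ((γ 1 0 : ℂ) * τ + (γ 1 1 : ℂ))) =
      ((γ 1 0 : ℂ) * τ + (γ 1 1 : ℂ)) ^ k * Complex.exp (2 * Real.pi * Complex.I * (m : ℂ) * (γ 1 0 : ℂ) * z ^ 2 / ((γ 1 0 : ℂ) * τ + (γ 1 1 : ℂ))) * g τ z)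
    (mu : ℝ) (j : ℕ) (hlow : ∀ i < j, ∀ τ : ℍ, iteratedDeriv i (g τ) mu = 0) :
    ‖((fun τ : ℍ => iteratedDeriv j (g τ) mu) ∣[k + j] γ) τ‖ =
      ‖iteratedDeriv j (jcG m g (mu * (γ 1 0 : ℤ)) (mu * (γ 1 1 : ℤ)) τ) 0‖ := by
  have hJ : (γ 1 0 : ℂ) * τ + (γ 1 1 : ℂ) ≠ 0 := by
    have := UpperHalfPlane.denom_ne_zero γ τ
    simpa [ModularGroup.denom_apply] using this
  have hden : UpperHalfPlane.denom γ τ = (γ 1 0 : ℂ) * τ + (γ 1 1 : ℂ) := by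
    simp [ModularGroup.denom_apply]
  have hact : ((γ • τ : ℍ) : ℂ) = ((γ 0 0 : ℂ) * τ + (γ 0 1 : ℂ)) / ((γ 1 0 : ℂ) * τ + (γ 1 1 : ℂ)) := by
    rw [UpperHalfPlane.coe_specialLinearGroup_apply]; simp
  rw [ModularForm.SL_slash_apply, hden]
  have hfun := funext (jcG_transf k m g _ _ _ _ τ hJ h1 mu)
  rw [hfun, ← hact]
  set J := (γ 1 0 : ℂ) * τ + (γ 1 1 : ℂ) with hJdef
  have hgd := hg (γ • τ : ℍ) (γ • τ).im_pos
  have hsc : ∀ i, iteratedDeriv i (fun z => g (γ • τ : ℍ) (J⁻¹ * z + mu)) 0 =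
      J⁻¹ ^ i * iteratedDeriv i (g (γ • τ : ℍ)) mu := by
    intro i
    have hd2 : Differentiable ℂ (fun z => g (γ • τ : ℍ) (z + mu)) := by
      exact hgd.comp (by fun_prop)
    have := iteratedDeriv_comp_const_mul (n := i) (hd2.contDiff) J⁻¹
    rw [this, iteratedDeriv_comp_add_const]
    simp
  rw [iteratedDeriv_const_mul_field, jc_leib _ _ _ _ j, hsc]
  · rw [norm_mul, norm_mul, norm_mul, norm_mul, norm_mul, jc_phase]
    have : ‖J ^ (-(k + j : ℤ))‖ = ‖(J ^ k)⁻¹‖ * ‖J⁻¹ ^ j‖ := by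
      rw [← norm_mul]
      congr 1
      rw [neg_add, zpow_add₀ hJ, zpow_neg, zpow_neg, zpow_natCast, inv_pow]
    rw [this]
    simp
    ring
  · intro i hi
    rw [hsc, hlow i hi]; simp
  · fun_prop
  · exact hgd.comp (f := fun z : ℂ => J⁻¹ * z + mu) (by fun_prop)

lemma jcEv_iteratedDeriv (p : LaurentPolynomial ℂ) (z : ℂ) (j : ℕ) :
    HasSum (fun ρ : ℤ => ((2 * Real.pi * Complex.I * ρ) ^ j * p.coeff ρ) *
      Complex.exp (2 * Real.pi * Complex.I * (ρ * z))) (iteratedDeriv j (jcEv p) z) := by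
  have e : jcEv p = fun z => ∑ n ∈ p.coeff.support, p.coeff n * Complex.exp ((2 * Real.pi * Complex.I * n) * z) := by
    funext z
    rw [jcEv_eq]
    simp only [mul_assoc]
  have e2 : iteratedDeriv j (jcEv p) z = ∑ ρ ∈ p.coeff.support, ((2 * Real.pi * Complex.I * ρ) ^ j * p.coeff ρ) *
      Complex.exp (2 * Real.pi * Complex.I * (ρ * z)) := by
    rw [e, iteratedDeriv_fun_sum (fun i _ => by fun_prop)]
    refine Finset.sum_congr rfl fun ρ _ => ?_
    rw [iteratedDeriv_const_mul_field, iteratedDeriv_cexp_const_mul]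
    simp only [mul_assoc]
    ring
  rw [e2]
  apply hasSum_sum_of_ne_finset_zero
  intro ρ hρ
  rw [Finsupp.notMem_support_iff] at hρ
  simp [hρ]

lemma jc_num (r : ℕ) (hr : 1 ≤ r) : 1 ≤ (r : ℝ) * ∏ p ∈ r.primeFactors, (1 - 1 / (p : ℝ) ^ 2) := by
  have h1 : (∏ p ∈ r.primeFactors, (p : ℝ)) ≤ r := by
    have := Nat.le_of_dvd hr (Nat.prod_primeFactors_dvd r)
    rw [← Nat.cast_prod]
    exact Nat.cast_le.mpr this
  have h2 : ∀ p ∈ r.primeFactors, (2 : ℝ) ≤ p := by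
    intro p hp
    exact_mod_cast (Nat.prime_of_mem_primeFactors hp).two_le
  have h3 : (0 : ℝ) ≤ ∏ p ∈ r.primeFactors, (1 - 1 / (p : ℝ) ^ 2) := by
    apply Finset.prod_nonneg
    intro p hp
    have := h2 p hp
    rw [sub_nonneg, div_le_one (by positivity)]
    nlinarith
  calc (1 : ℝ) ≤ ∏ p ∈ r.primeFactors, ((p : ℝ) * (1 - 1 / (p : ℝ) ^ 2)) := by
        refine le_trans (Finset.prod_const_one (s := r.primeFactors)).ge (Finset.prod_le_prod ?_ ?_)
        · simp
        · intro p hp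
          have := h2 p hp
          have h5 : (p : ℝ) * (1 - 1 / (p : ℝ) ^ 2) = p - 1 / p := by field_simp
          rw [h5]
          have : 1 / (p : ℝ) ≤ 1 := by rw [div_le_one (by linarith)]; linarith
          linarith
    _ = (∏ p ∈ r.primeFactors, (p : ℝ)) * ∏ p ∈ r.primeFactors, (1 - 1 / (p : ℝ) ^ 2) := Finset.prod_mul_distrib
    _ ≤ _ := mul_le_mul_of_nonneg_right h1 h3

/-- the key vanishing statement at a torsion point -/
lemma jc_vanish (k m : ℤ) (hm : 0 < m) (c : ℤ × ℤ → ℂ) (hc : jcS c)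
    (hcusp : ∀ n ρ : ℤ, 4 * n * m - ρ ^ 2 ≤ 0 → c (n, ρ) = 0)
    (T1 : ∀ (γ : SL(2, ℤ)) (τ : ℍ) (z : ℂ),
      jcF c (((γ 0 0 : ℂ) * τ + (γ 0 1 : ℂ)) / ((γ 1 0 : ℂ) * τ + (γ 1 1 : ℂ))) (z / ((γ 1 0 : ℂ) * τ + (γ 1 1 : ℂ))) =
      ((γ 1 0 : ℂ) * τ + (γ 1 1 : ℂ)) ^ k * Complex.exp (2 * Real.pi * Complex.I * (m : ℂ) * (γ 1 0 : ℂ) * z ^ 2 / ((γ 1 0 : ℂ) * τ + (γ 1 1 : ℂ))) * jcF c τ z)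
    (T2 : ∀ lam mu : ℤ, ∀ τ z : ℂ, 0 < τ.im →
      jcF c τ (z + (lam : ℂ) * τ + (mu : ℂ)) =
        Complex.exp (2 * Real.pi * Complex.I *
            (-(m : ℂ) * (lam : ℂ) ^ 2 * τ - 2 * (m : ℂ) * (lam : ℂ) * z)) * jcF c τ z)
    (gLP : ℤ → LaurentPolynomial ℂ) (hgLP : ∀ n ρ : ℤ, (gLP n).coeff ρ = c (n, ρ))
    (r : ℕ) [NeZero r] (a V : ℕ) (N : ℝ)
    (hN : N = ((k : ℝ) + V - 1) / 12 * (r : ℝ) ^ 3 * ∏ p ∈ r.primeFactors, (1 - 1 / (p : ℝ) ^ 2))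
    (hlow : ∀ n : ℤ, 0 ≤ n → (n : ℝ) ≤ N → ∀ i < V, iteratedDeriv i (jcEv (gLP n)) ((a / r : ℝ) : ℂ) = 0) :
    ∀ j < V, ∀ n, iteratedDeriv j (jcEv (gLP n)) ((a / r : ℝ) : ℂ) = 0 := by
  set mu : ℝ := a / r with hmu
  have hr : 1 ≤ r := Nat.one_le_iff_ne_zero.mpr (NeZero.ne r)
  have hcneg : ∀ p : ℤ × ℤ, p.1 < 0 → c p = 0 := by
    rintro ⟨n, ρ⟩ hp
    apply hcusp
    simp only at hp
    nlinarith [sq_nonneg ρ]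
  have hdiff : ∀ τ : ℂ, 0 < τ.im → Differentiable ℂ (jcF c τ) := fun τ hτ => jcF_differentiable hc τ hτ
  have hq : ∀ j : ℕ, (Summable fun n : ℤ => ‖iteratedDeriv j (jcEv (gLP n)) mu‖ * Real.exp (-(2 * Real.pi) * n)) ∧
      ∀ τ : ℂ, 0 < τ.im → HasSum (fun n : ℤ => iteratedDeriv j (jcEv (gLP n)) mu *
        Complex.exp (2 * Real.pi * Complex.I * (n * τ))) (iteratedDeriv j (jcF c τ) mu) := by
    intro j
    have h := jc_qseries (jcS_pow hc j) (mu : ℂ) (fun n => iteratedDeriv j (jcEv (gLP n)) mu) (by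
      intro n
      have := jcEv_iteratedDeriv (gLP n) mu j
      simpa only [hgLP] using this)
    refine ⟨h.1, fun τ hτ => ?_⟩
    rw [jcF_iteratedDeriv hc τ hτ]
    exact h.2 τ hτ
  have hneg : ∀ (j : ℕ) (n : ℤ), n < 0 → iteratedDeriv j (jcEv (gLP n)) mu = 0 := by
    intro j n hn
    have := jcEv_iteratedDeriv (gLP n) mu j
    have h0 : ∀ ρ : ℤ, c (n, ρ) = 0 := fun ρ => hcneg _ hn
    simp only [hgLP, h0, mul_zero, zero_mul] at this
    exact this.unique hasSum_zero
  have key : ∀ j < V, ∀ τ : ℍ, iteratedDeriv j (jcF c τ) mu = 0 := by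
    intro j
    induction j using Nat.strong_induction_on with
    | _ j ih =>
      intro hj
      have hlowj : ∀ i < j, ∀ τ : ℍ, iteratedDeriv i (jcF c τ) mu = 0 := fun i hi => ih i hi (hi.trans hj)
      have hsl := fun (γ : SL(2, ℤ)) (τ : ℍ) =>
        jc_slash_norm k m (jcF c) γ τ hdiff (T1 γ τ) mu j hlowj
      obtain ⟨n₀, hn₀, hn₁⟩ : ∃ n₀ : ℕ, (∀ n : ℤ, 0 ≤ n → n < n₀ → (n : ℝ) ≤ N) ∧ N < n₀ := by
        rcases lt_or_ge N 0 with h | h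
        · exact ⟨0, fun n h1 h2 => by push_cast at h2; omega, by simpa using h⟩
        · refine ⟨⌊N⌋₊ + 1, fun n h1 h2 => ?_, by push_cast; exact Nat.lt_floor_add_one N⟩
          obtain ⟨l, rfl⟩ := Int.eq_ofNat_of_zero_le h1
          have h3 : l ≤ ⌊N⌋₊ := by omega
          have := (Nat.le_floor_iff h).mp h3
          simpa using this
      refine jc_core (fun τ : ℍ => iteratedDeriv j (jcF c τ) mu) ?_ (k + j) r n₀ ?_ ?_ ?_ ?_
      · rw [UpperHalfPlane.mdifferentiable_iff]
        have := jcF_differentiableOn (jcS_pow hc j) (fun p hp => by rw [hcneg p hp, mul_zero]) (mu : ℂ)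
        refine this.congr fun τ hτ => ?_
        have hτ' : 0 < τ.im := hτ
        simp only [Function.comp_apply, UpperHalfPlane.ofComplex_apply_of_im_pos hτ']
        rw [← jcF_iteratedDeriv hc τ hτ']
      · intro γ γ' hcls τ
        rw [hsl, hsl]
        simp only [jcCls, Prod.mk.injEq] at hcls
        obtain ⟨l, hl⟩ := (ZMod.intCast_eq_intCast_iff_dvd_sub _ _ r).mp hcls.1
        obtain ⟨u, hu⟩ := (ZMod.intCast_eq_intCast_iff_dvd_sub _ _ r).mp hcls.2
        have hr0 : (r : ℝ) ≠ 0 := by exact_mod_cast NeZero.ne r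
        have e1 : mu * ((γ' 1 0 : ℤ) : ℝ) = mu * ((γ 1 0 : ℤ) : ℝ) + ((a * l : ℤ) : ℝ) := by
          have : (γ' 1 0 : ℤ) = γ 1 0 + r * l := by linarith
          rw [this, hmu]; push_cast; field_simp
        have e2 : mu * ((γ' 1 1 : ℤ) : ℝ) = mu * ((γ 1 1 : ℤ) : ℝ) + ((a * u : ℤ) : ℝ) := by
          have : (γ' 1 1 : ℤ) = γ 1 1 + r * u := by linarith
          rw [this, hmu]; push_cast; field_simp
        rw [e1, e2]
        have := funext fun z => jcG_shift m (jcF c) T2 (mu * ((γ 1 0 : ℤ) : ℝ)) (mu * ((γ 1 1 : ℤ) : ℝ)) (a * l) (a * u) τ z τ.im_pos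
        rw [this, iteratedDeriv_const_mul_field, norm_mul, jc_phase, one_mul]
      · intro γ
        obtain ⟨C, hC⟩ := jcG_bound m hm hc hcusp (mu * ((γ 1 0 : ℤ) : ℝ)) (mu * ((γ 1 1 : ℤ) : ℝ))
        refine ⟨j.factorial * C / 1 ^ j, fun τ hτ => ?_⟩
        rw [hsl]
        apply Complex.norm_iteratedDeriv_le_of_forall_mem_sphere_norm_le j one_pos
        · apply Differentiable.diffContOnCl
          unfold jcG
          have h1 := (hdiff τ τ.im_pos).comp (f := fun z : ℂ => z + ((mu * ((γ 1 0 : ℤ) : ℝ) : ℝ) : ℂ) * τ + ((mu * ((γ 1 1 : ℤ) : ℝ) : ℝ) : ℂ)) (by fun_prop)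
          exact Differentiable.mul (by fun_prop) h1
        · intro z hz
          apply hC
          · exact hτ
          · simpa using (mem_sphere_zero_iff_norm.mp hz).le
      · obtain ⟨C, hC⟩ := jc_decay _ (hq j).1 n₀ (by
          intro n hn
          rcases lt_or_ge n 0 with h | h
          · exact hneg j n h
          · exact hlow n h (hn₀ n h hn) j hj)
        refine ⟨C, fun τ hτ => ?_⟩
        have := hC τ _ hτ ((hq j).2 τ τ.im_pos)
        simpa using this
      · intro X hX1 hX2
        have hX1' : (1 : ℝ) ≤ X := by exact_mod_cast hX1
        have hX2' : (X : ℝ) ≤ (r : ℝ) ^ 2 := by exact_mod_cast hX2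
        have goal : ((k : ℝ) + j) * X < 12 * n₀ := by
          have hn0 : (0 : ℝ) ≤ n₀ := Nat.cast_nonneg _
          rcases lt_or_ge ((k : ℝ) + j) 0 with h | h
          · nlinarith
          · have hP := jc_num r hr
            have hjV : (j : ℝ) ≤ V - 1 := by
              have : (j : ℝ) + 1 ≤ V := by exact_mod_cast hj
              linarith
            set P := ∏ p ∈ r.primeFactors, (1 - 1 / (p : ℝ) ^ 2)
            have h1 : ((k : ℝ) + j) * X ≤ ((k : ℝ) + V - 1) * (r : ℝ) ^ 2 :=
              mul_le_mul (by linarith) hX2' (by linarith) (by linarith)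
            have h2 : ((k : ℝ) + V - 1) * (r : ℝ) ^ 2 * 1 ≤ ((k : ℝ) + V - 1) * (r : ℝ) ^ 2 * (r * P) :=
              mul_le_mul_of_nonneg_left hP (mul_nonneg (by linarith) (by positivity))
            have h3 : 12 * N = ((k : ℝ) + V - 1) * (r : ℝ) ^ 2 * (r * P) := by rw [hN]; ring
            linarith
        exact_mod_cast goal
  intro j hj
  apply jc_unique _ (hq j).1 (hneg j)
  intro τ hτ
  have := (hq j).2 τ hτ
  rwa [key j hj ⟨τ, hτ⟩] at this

end PartD



/-- Theorem 5.3, m-independent bound: let `g` be a Jacobi cusp form of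
weight `k` and positive index `m` with `qⁿ`-coefficients the Laurent polynomials
`g_n(ζ)`, let `ν : ℤ_{>0} → ℤ_{≥0}` be finitely supported (encoded by a bound `Nb`),
and let `b(ζ) = Π_{r≥1} Φ_r(ζ)^{ν(r)}`.  If `b(ζ)` divides `g_n(ζ)` in `ℂ[ζ,ζ⁻¹]` for
every `n` with `0 ≤ n ≤ max_{r≥1, ν(r)>0} ((k+ν(r)−1)/12)·r³·Π_{p∣r}(1−1/p²)`, then
`b(ζ)` divides `g_n(ζ)` for every `n`. -/
theorem stmt_5 (k : ℤ) (m : ℤ) (hm : 0 < m)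
    (g : ℂ → ℂ → ℂ)
    (hol : DifferentiableOn ℂ (fun p : ℂ × ℂ => g p.1 p.2) {p : ℂ × ℂ | 0 < p.1.im})
    (transf₁ : ∀ γ : Matrix.SpecialLinearGroup (Fin 2) ℤ, ∀ τ z : ℂ, 0 < τ.im →
      g ((((γ : Matrix (Fin 2) (Fin 2) ℤ) 0 0 : ℂ) * τ + ((γ : Matrix (Fin 2) (Fin 2) ℤ) 0 1 : ℂ)) /
           (((γ : Matrix (Fin 2) (Fin 2) ℤ) 1 0 : ℂ) * τ + ((γ : Matrix (Fin 2) (Fin 2) ℤ) 1 1 : ℂ)))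
        (z / (((γ : Matrix (Fin 2) (Fin 2) ℤ) 1 0 : ℂ) * τ + ((γ : Matrix (Fin 2) (Fin 2) ℤ) 1 1 : ℂ))) =
      (((γ : Matrix (Fin 2) (Fin 2) ℤ) 1 0 : ℂ) * τ + ((γ : Matrix (Fin 2) (Fin 2) ℤ) 1 1 : ℂ)) ^ k *
        Complex.exp (2 * Real.pi * Complex.I * (m : ℂ) * ((γ : Matrix (Fin 2) (Fin 2) ℤ) 1 0 : ℂ) * z ^ 2 /
          (((γ : Matrix (Fin 2) (Fin 2) ℤ) 1 0 : ℂ) * τ + ((γ : Matrix (Fin 2) (Fin 2) ℤ) 1 1 : ℂ))) *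
        g τ z)
    (transf₂ : ∀ lam mu : ℤ, ∀ τ z : ℂ, 0 < τ.im →
      g τ (z + (lam : ℂ) * τ + (mu : ℂ)) =
        Complex.exp (2 * Real.pi * Complex.I *
            (-(m : ℂ) * (lam : ℂ) ^ 2 * τ - 2 * (m : ℂ) * (lam : ℂ) * z)) * g τ z)
    (c : ℤ × ℤ → ℂ)
    (habs : ∀ τ z : ℂ, 0 < τ.im → Summable (fun p : ℤ × ℤ =>
      ‖c p * Complex.exp (2 * Real.pi * Complex.I * ((p.1 : ℂ) * τ + (p.2 : ℂ) * z))‖))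
    (hsum : ∀ τ z : ℂ, 0 < τ.im →
      HasSum (fun p : ℤ × ℤ =>
        c p * Complex.exp (2 * Real.pi * Complex.I * ((p.1 : ℂ) * τ + (p.2 : ℂ) * z)))
        (g τ z))
    (hcusp : ∀ n ρ : ℤ, 4 * n * m - ρ ^ 2 ≤ 0 → c (n, ρ) = 0)
    (gLP : ℤ → LaurentPolynomial ℂ)
    (hgLP : ∀ n ρ : ℤ, (gLP n).coeff ρ = c (n, ρ))
    (ν : ℕ → ℕ) (Nb : ℕ) (hNb : ∀ r : ℕ, Nb < r → ν r = 0)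
    (bL : LaurentPolynomial ℂ)
    (hbL : bL = ∏ r ∈ Finset.Icc 1 Nb, ((Polynomial.cyclotomic r ℂ).toLaurent) ^ ν r)
    (hdvd : ∀ n : ℤ, 0 ≤ n →
      (∃ rr : ℕ, 1 ≤ rr ∧ 0 < ν rr ∧
        (n : ℝ) ≤ ((k : ℝ) + (ν rr : ℝ) - 1) / 12 * (rr : ℝ) ^ 3 *
          ∏ p ∈ rr.primeFactors, (1 - 1 / (p : ℝ) ^ 2)) →
      bL ∣ gLP n) :
    ∀ n : ℤ, bL ∣ gLP n := by
  have hc : jcS c := habs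
  have hg : ∀ τ z : ℂ, 0 < τ.im → g τ z = jcF c τ z := fun τ z hτ => (hsum τ z hτ).tsum_eq.symm
  intro n
  rw [hbL]
  apply jc_prod_dvd
  intro r hr
  rw [Finset.mem_Icc] at hr
  rcases Nat.eq_zero_or_pos (ν r) with h0 | hpos
  · rw [h0, pow_zero]; exact one_dvd _
  have : NeZero r := ⟨by omega⟩
  apply jc_cyclo_dvd r hr.1
  intro a ha
  have ez : ((a : ℂ) / r) = ((a / r : ℝ) : ℂ) := by push_cast; rfl
  rw [ez, jc_dvd_iff]
  intro j hj
  refine jc_vanish k m hm c hc hcusp ?_ ?_ gLP hgLP r a (ν r) _ rfl ?_ j hj n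
  · intro γ τ z
    have him : 0 < (((γ 0 0 : ℂ) * τ + (γ 0 1 : ℂ)) / ((γ 1 0 : ℂ) * τ + (γ 1 1 : ℂ))).im := by
      have h1 := (γ • τ).im_pos
      rw [← UpperHalfPlane.coe_im, UpperHalfPlane.coe_specialLinearGroup_apply] at h1
      simpa using h1
    rw [← hg _ _ him, ← hg _ _ τ.im_pos]
    exact transf₁ γ τ z τ.im_pos
  · intro lam mu τ z hτ
    rw [← hg _ _ hτ, ← hg _ _ hτ]
    exact transf₂ lam mu τ z hτ
  · intro n' hn' hle
    rw [← jc_dvd_iff, ← ez]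
    apply jc_dvd_cyclo r a hr.1 ha
    have h1 := hdvd n' hn' ⟨r, hr.1, hpos, hle⟩
    rw [hbL] at h1
    exact dvd_trans (Finset.dvd_prod_of_mem
      (fun r : ℕ => ((Polynomial.cyclotomic r ℂ).toLaurent) ^ ν r) (Finset.mem_Icc.mpr hr)) h1
end
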